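/- arXiv:1511.09280 — 2 statements merged into one kernel-verified Lean document; each statement's English description precedes it below -/
import Mathlib

section
/- Let X be a Cantor space, K a dynamical simplex on X, and G the group of all homeomorphisms of X preserving every measure in K. Then there exists a K-saturated element g of G. -/
/-!
The homeomorphism is the limit of a sequence of Kakutani–Rokhlin partitions, each a finite family of
towers of `K`-equivalent clopen levels. Such a partition prescribes that a point moves up one level,
or from the top to the base. Refining it by cutting and stacking towers shrinks this relation, and
if every clopen set is eventually split neither by a level nor by the base nor by the top, then the
relations intersect in the graph of a homeomorphism `g`. As `g` maps levels to `K`-equivalent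
levels, it preserves the measures in `K`. If moreover, for each pair of `K`-equivalent clopen sets
`U` and `V`, every tower of some stage has as many levels in `U` as in `V`, then permuting the
levels within the towers, by powers of `g`, takes `U` to `V`.

Both demands on the sequence are met by one move. If the base of a tower is `K`-equivalent to a
clopen part `C` of the bases of some other towers, it can be cut into pieces which are stacked on
those towers over `C`. Stacking everything over a tiny set makes the base small, and what is stacked
last controls the top. To balance `U` against `V`, consider the excess of levels in `U` over levels
in `V`. Weighted by the measures of the bases the excesses add up to `μ U - μ V = 0`, so a tower of
maximal excess fits over those of negative excess; doing this alternately for `U, V` and for `V, U`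
brings all excesses to `0`.
-/

open MeasureTheory

namespace DynSimplex

variable {X : Type*} [TopologicalSpace X] [MeasurableSpace X] [OpensMeasurableSpace X]

/-- `g` preserves the probability measure `μ`, i.e. `g_*μ = μ`. -/
def Preserves (g : X ≃ₜ X) (μ : ProbabilityMeasure X) : Prop :=
  (μ : Measure X).map g = (μ : Measure X)

/-- A homeomorphism is minimal if all of its (two-sided) orbits are dense. -/
def IsMinimal (g : X ≃ₜ X) : Prop :=
  ∀ x : X, Dense (Set.range fun n : ℤ => (g.toEquiv ^ n) x)

/-- A set of probability measures is good if for all clopen `A`, `B` with `μ A < μ B` for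
all `μ ∈ K`, there is a clopen `C ⊆ B` with `μ C = μ A` for all `μ ∈ K`. -/
def Good (K : Set (ProbabilityMeasure X)) : Prop :=
  ∀ A B : Set X, IsClopen A → IsClopen B → (∀ μ ∈ K, μ A < μ B) →
    ∃ C : Set X, IsClopen C ∧ C ⊆ B ∧ ∀ μ ∈ K, μ C = μ A

/-- Approximate divisibility of a set of probability measures. -/
def ApproximatelyDivisible (K : Set (ProbabilityMeasure X)) : Prop :=
  ∀ A : Set X, IsClopen A → ∀ n : ℕ, 1 ≤ n → ∀ ε : ℝ, 0 < ε →
    ∃ B : Set X, IsClopen B ∧ B ⊆ A ∧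
      ∀ μ ∈ K, (μ A : ℝ) - ε ≤ (n : ℝ) * (μ B : ℝ) ∧ (n : ℝ) * (μ B : ℝ) ≤ (μ A : ℝ)

/-- A probability measure has full support if every nonempty open set has positive measure. -/
def FullSupport (μ : ProbabilityMeasure X) : Prop :=
  ∀ U : Set X, IsOpen U → U.Nonempty → 0 < μ U

/-- A probability measure is atomless if all singletons are null. -/
def Atomless (μ : ProbabilityMeasure X) : Prop :=
  ∀ x : X, μ {x} = 0

/-- Convexity of a set of probability measures (as a subset of the `ℝ≥0`-module of
finite measures). -/
def ProbConvex (K : Set (ProbabilityMeasure X)) : Prop :=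
  Convex NNReal (ProbabilityMeasure.toFiniteMeasure '' K)

/-- The set of extreme points of a set of probability measures. -/
def ProbExtremePoints (K : Set (ProbabilityMeasure X)) : Set (ProbabilityMeasure X) :=
  ProbabilityMeasure.toFiniteMeasure ⁻¹'
    (Set.extremePoints NNReal (ProbabilityMeasure.toFiniteMeasure '' K))

/-- A dynamical simplex: a nonempty compact convex set of atomless, fully supported
probability measures which is good and approximately divisible. -/
def DynamicalSimplex (K : Set (ProbabilityMeasure X)) : Prop :=
  K.Nonempty ∧ IsCompact K ∧ ProbConvex K ∧
    (∀ μ ∈ K, Atomless μ ∧ FullSupport μ) ∧ Good K ∧ ApproximatelyDivisible K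

/-- Membership in the full group of `g`. -/
def InFullGroup (g h : X ≃ₜ X) : Prop :=
  ∀ x : X, ∃ n : ℤ, h x = (g.toEquiv ^ n) x

/-- Membership in the topological full group of `g`: `h` is given piecewise by powers of `g`
on a finite clopen partition of `X`. -/
def InTopologicalFullGroup (g h : X ≃ₜ X) : Prop :=
  ∃ (k : ℕ) (A : Fin k → Set X) (n : Fin k → ℤ),
    (∀ i, IsClopen (A i)) ∧ (∀ x : X, ∃! i, x ∈ A i) ∧
    ∀ i, ∀ x ∈ A i, h x = (g.toEquiv ^ (n i)) x

/-- `g` preserves every measure in `K` (i.e. `g` belongs to the group `G`). -/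
def PreservesAll (K : Set (ProbabilityMeasure X)) (g : X ≃ₜ X) : Prop :=
  ∀ μ ∈ K, Preserves g μ

/-- `g` is `K`-saturated: any two `K`-equivalent clopen sets are mapped one to the other by
an element of the topological full group of `g`. -/
def KSaturated (K : Set (ProbabilityMeasure X)) (g : X ≃ₜ X) : Prop :=
  ∀ U V : Set X, IsClopen U → IsClopen V → (∀ μ ∈ K, μ U = μ V) →
    ∃ h : X ≃ₜ X, InTopologicalFullGroup g h ∧ h '' U = V

/-- The topology of uniform convergence on the homeomorphism group of a compact space
(the compact-open topology, induced from `C(X, X)`). -/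
instance : TopologicalSpace (X ≃ₜ X) :=
  TopologicalSpace.induced (fun h : X ≃ₜ X => (h : C(X, X))) inferInstance

/-- A KR-partition for `K`: a finite family of columns, each column being a finite sequence of
clopen sets which are all `K`-equivalent, the atoms of all columns forming a partition of `X`. -/
structure KRPartition (X : Type*) [TopologicalSpace X] [MeasurableSpace X]
    (K : Set (ProbabilityMeasure X)) where
  numCols : ℕ
  height : Fin numCols → ℕ
  atom : (i : Fin numCols) → Fin (height i + 1) → Set X
  clopen : ∀ i j, IsClopen (atom i j)
  equivK : ∀ i j j', ∀ μ ∈ K, μ (atom i j) = μ (atom i j')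
  partition : ∀ x : X, ∃! p : (i : Fin numCols) × Fin (height i + 1), x ∈ atom p.1 p.2

/-- The base of a KR-partition: the union of the first atoms of the columns. -/
def KRPartition.base {K : Set (ProbabilityMeasure X)} (T : KRPartition X K) : Set X :=
  ⋃ i, T.atom i 0

/-- The top of a KR-partition: the union of the last atoms of the columns. -/
def KRPartition.top {K : Set (ProbabilityMeasure X)} (T : KRPartition X K) : Set X :=
  ⋃ i, T.atom i (Fin.last _)

/-- `S` refines `T`: the base (resp. top) of `S` is contained in the base (resp. top) of `T`,
and every column of `S` is obtained by cutting and stacking columns of `T`. -/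
def KRPartition.Refines {K : Set (ProbabilityMeasure X)} (S T : KRPartition X K) : Prop :=
  S.base ⊆ T.base ∧ S.top ⊆ T.top ∧
  ∀ c : Fin S.numCols, ∃ (m : ℕ) (idx : Fin (m + 1) → Fin T.numCols)
    (piece : (k : Fin (m + 1)) → Fin (T.height (idx k) + 1) → Set X),
    (∀ k j, piece k j ⊆ T.atom (idx k) j) ∧
    (S.height c + 1 = ∑ k : Fin (m + 1), (T.height (idx k) + 1)) ∧
    ∀ (k : Fin (m + 1)) (j : Fin (T.height (idx k) + 1))
      (hlt : (∑ l ∈ Finset.Iio k, (T.height (idx l) + 1)) + (j : ℕ) < S.height c + 1),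
      S.atom c ⟨(∑ l ∈ Finset.Iio k, (T.height (idx l) + 1)) + (j : ℕ), hlt⟩ = piece k j

/-- A KR-partition is compatible with a clopen set `U` if `U` is a union of its atoms,
equivalently every atom is either contained in `U` or disjoint from it. -/
def KRPartition.Compatible {K : Set (ProbabilityMeasure X)} (S : KRPartition X K)
    (U : Set X) : Prop :=
  ∀ i j, S.atom i j ⊆ U ∨ Disjoint (S.atom i j) U

end DynSimplex

namespace DynSimplex

/-! ### `K`-equivalence of clopen sets -/

section KEquiv

variable {X : Type*} [MeasurableSpace X] {K : Set (ProbabilityMeasure X)} {A B C E F : Set X}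

lemma measure_add_measure_sdiff (μ : ProbabilityMeasure X) (hE : MeasurableSet E) (h : E ⊆ A) :
    μ E + μ (A \ E) = μ A := by
  have := measure_inter_add_sdiff (μ := (μ : Measure X)) A hE
  rw [Set.inter_eq_self_of_subset_right h] at this
  simp only [← ProbabilityMeasure.ennreal_coeFn_eq_coeFn_toMeasure] at this
  exact_mod_cast this

lemma measure_biUnion_eq_sum {ι : Type*} (μ : ProbabilityMeasure X) {s : Finset ι} {f : ι → Set X}
    (hd : (s : Set ι).PairwiseDisjoint f) (hm : ∀ i ∈ s, MeasurableSet (f i)) :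
    μ (⋃ i ∈ s, f i) = ∑ i ∈ s, μ (f i) := by
  have := measure_biUnion_finset (μ := (μ : Measure X)) hd hm
  simp only [← ProbabilityMeasure.ennreal_coeFn_eq_coeFn_toMeasure] at this
  exact_mod_cast this

/-- `K`-equivalence `A ∼_K B`: every measure in `K` gives `A` and `B` the same mass. -/
def KEquiv (K : Set (ProbabilityMeasure X)) (A B : Set X) : Prop :=
  ∀ μ ∈ K, μ A = μ B

lemma KEquiv.refl (A : Set X) : KEquiv K A A := fun _ _ => rfl

lemma KEquiv.symm (h : KEquiv K A B) : KEquiv K B A := fun μ hμ => (h μ hμ).symm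

lemma KEquiv.trans (h : KEquiv K A B) (h' : KEquiv K B C) : KEquiv K A C :=
  fun μ hμ => (h μ hμ).trans (h' μ hμ)

lemma KEquiv.sdiff (h : KEquiv K A B) (h' : KEquiv K E F) (hE : MeasurableSet E)
    (hF : MeasurableSet F) (hEA : E ⊆ A) (hFB : F ⊆ B) : KEquiv K (A \ E) (B \ F) := by
  intro μ hμ
  have hsum : μ E + μ (A \ E) = μ F + μ (B \ F) := by
    rw [measure_add_measure_sdiff μ hE hEA, measure_add_measure_sdiff μ hF hFB, h μ hμ]
  rwa [h' μ hμ, add_right_inj] at hsum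

end KEquiv

section Comparison

variable {X : Type*} [TopologicalSpace X] [MeasurableSpace X] {K : Set (ProbabilityMeasure X)}
  {A B E : Set X}

/-- The standing assumptions under which clopen sets can be compared up to `K`-equivalence: `K` is
nonempty and good, and its members have full support. -/
structure Comparison (K : Set (ProbabilityMeasure X)) : Prop where
  nonempty : K.Nonempty
  fullSupport : ∀ μ ∈ K, FullSupport μ
  good : Good K

/-- Each point has clopen neighborhoods which are smaller, for all measures in `K`, than any given
nonempty clopen set. -/
def HasSmallNeighborhoods (K : Set (ProbabilityMeasure X)) : Prop :=
  ∀ (x : X) (B : Set X), IsClopen B → B.Nonempty →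
    ∃ C : Set X, IsClopen C ∧ x ∈ C ∧ ∀ μ ∈ K, μ C < μ B

lemma exists_isClopen_measure_lt [CompactSpace X] [TopologicalSpace.MetrizableSpace X]
    [TotallyDisconnectedSpace X] [BorelSpace X] {μ : ProbabilityMeasure X} (hμ : Atomless μ)
    (hpos : 0 < μ B) (x : X) : ∃ C : Set X, IsClopen C ∧ x ∈ C ∧ μ C < μ B := by
  have hx : (μ : Measure X) {x} < (μ : Measure X) B := by
    rw [← ProbabilityMeasure.ennreal_coeFn_eq_coeFn_toMeasure,
      ← ProbabilityMeasure.ennreal_coeFn_eq_coeFn_toMeasure, hμ x]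
    exact_mod_cast hpos
  obtain ⟨U, hxU, hU, hlt⟩ := Set.exists_isOpen_lt_of_lt {x} _ hx
  obtain ⟨C, hC, hxC, hCU⟩ := compact_exists_isClopen_in_isOpen hU (hxU rfl)
  refine ⟨C, hC, hxC, ?_⟩
  have hlt' := (measure_mono hCU).trans_lt hlt
  rw [← ProbabilityMeasure.ennreal_coeFn_eq_coeFn_toMeasure,
    ← ProbabilityMeasure.ennreal_coeFn_eq_coeFn_toMeasure] at hlt'
  exact_mod_cast hlt'

/-- The smallness condition at a single measure persists nearby because `ν ↦ ν A` is continuous for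
clopen `A`, so compactness of `K` yields a neighborhood which is small for all of `K`. -/
lemma hasSmallNeighborhoods [CompactSpace X] [TopologicalSpace.MetrizableSpace X]
    [TotallyDisconnectedSpace X] [BorelSpace X] (hcompact : IsCompact K)
    (hK : ∀ μ ∈ K, Atomless μ ∧ FullSupport μ) : HasSmallNeighborhoods K := by
  intro x B hB hne
  refine hcompact.induction_on
    (p := fun s => ∃ C : Set X, IsClopen C ∧ x ∈ C ∧ ∀ μ ∈ s, μ C < μ B) ?_ ?_ ?_ ?_
  · exact ⟨Set.univ, isClopen_univ, trivial, by simp⟩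
  · rintro s t hst ⟨C, hC, hxC, hlt⟩
    exact ⟨C, hC, hxC, fun μ hμ => hlt μ (hst hμ)⟩
  · rintro s t ⟨C, hC, hxC, hltC⟩ ⟨D, hD, hxD, hltD⟩
    refine ⟨C ∩ D, hC.inter hD, ⟨hxC, hxD⟩, ?_⟩
    rintro μ (hμ | hμ)
    · exact (μ.apply_mono Set.inter_subset_left).trans_lt (hltC μ hμ)
    · exact (μ.apply_mono Set.inter_subset_right).trans_lt (hltD μ hμ)
  · intro μ hμ
    obtain ⟨C, hC, hxC, hlt⟩ :=
      exists_isClopen_measure_lt (hK μ hμ).1 ((hK μ hμ).2 B hB.isOpen hne) x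
    have tendsto_measure {A : Set X} (hA : IsClopen A) :=
      ProbabilityMeasure.tendsto_measure_of_isClopen_of_tendsto
        (Filter.tendsto_id (x := nhds μ)) hA
    exact ⟨{ν | ν C < ν B}, mem_nhdsWithin_of_mem_nhds
      ((tendsto_measure hC).eventually_lt (tendsto_measure hB) hlt), C, hC, hxC, fun ν hν => hν⟩

lemma Comparison.nonempty_of_kequiv (H : Comparison K) (hA : IsClopen A) (hne : A.Nonempty)
    (h : KEquiv K A B) : B.Nonempty := by
  obtain ⟨μ, hμ⟩ := H.nonempty
  rw [Set.nonempty_iff_ne_empty]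
  rintro rfl
  have hpos := H.fullSupport μ hμ A hA.isOpen hne
  simp [h μ hμ] at hpos

lemma Comparison.exists_subset_kequiv_of_sum (H : Comparison K) (hA : IsClopen A) (hB : IsClopen B)
    {ι : Type*} {s : Finset ι} {w : ι → ℝ} {D : ι → Set X} {p : ℝ} (hp : 0 < p)
    (hw : ∀ i ∈ s, 0 ≤ w i) (hD : ∀ i ∈ s, IsClopen (D i))
    (h : ∀ μ ∈ K, p * ((μ B : ℝ) - μ A) = ∑ i ∈ s, w i * μ (D i)) :
    ∃ C ⊆ B, IsClopen C ∧ KEquiv K A C := by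
  have hterm (μ : ProbabilityMeasure X) i (hi : i ∈ s) : 0 ≤ w i * (μ (D i) : ℝ) :=
    mul_nonneg (hw i hi) (NNReal.coe_nonneg _)
  by_cases hex : ∃ i ∈ s, 0 < w i ∧ (D i).Nonempty
  · obtain ⟨i, hi, hwi, hne⟩ := hex
    obtain ⟨C, hC, hCB, hCA⟩ := H.good A B hA hB fun μ hμ => by
      have hpos : 0 < (μ (D i) : ℝ) := H.fullSupport μ hμ _ (hD i hi).isOpen hne
      have hsum : 0 < p * ((μ B : ℝ) - μ A) :=
        h μ hμ ▸ Finset.sum_pos' (hterm μ) ⟨i, hi, mul_pos hwi hpos⟩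
      exact_mod_cast sub_pos.1 (pos_of_mul_pos_right hsum hp.le)
    exact ⟨C, hCB, hC, fun μ hμ => (hCA μ hμ).symm⟩
  · refine ⟨B, subset_rfl, hB, fun μ hμ => ?_⟩
    have hzero : ∑ i ∈ s, w i * (μ (D i) : ℝ) = 0 := by
      refine Finset.sum_eq_zero fun i hi => ?_
      rcases (hw i hi).eq_or_lt with h0 | hpos
      · rw [← h0, zero_mul]
      · have hempty : D i = ∅ :=
          Set.not_nonempty_iff_eq_empty.1 fun hne => hex ⟨i, hi, hpos, hne⟩
        simp [hempty]
    have hBA := (mul_eq_zero_iff_left hp.ne').1 ((h μ hμ).trans hzero)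
    exact_mod_cast (sub_eq_zero.1 hBA).symm

lemma Comparison.exists_subset_kequiv [OpensMeasurableSpace X] (H : Comparison K)
    (hA : IsClopen A) (hB : IsClopen B) (hE : IsClopen E) (hEA : E ⊆ A) (hAB : KEquiv K A B) :
    ∃ F ⊆ B, IsClopen F ∧ KEquiv K E F := by
  refine H.exists_subset_kequiv_of_sum (s := {()}) (w := fun _ => 1) (D := fun _ => A \ E) hE hB
    one_pos (fun _ _ => zero_le_one) (fun _ _ => hA.diff hE) fun μ hμ => ?_
  rw [← hAB μ hμ, ← measure_add_measure_sdiff μ hE.isOpen.measurableSet hEA]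
  simp

lemma Comparison.exists_disjoint_kequiv (H : Comparison K) (hsmall : HasSmallNeighborhoods K)
    (hB : IsClopen B) (hne : B.Nonempty) :
    ∃ C D : Set X, C ⊆ B ∧ D ⊆ B ∧ IsClopen C ∧ IsClopen D ∧ C.Nonempty ∧ Disjoint C D ∧
      KEquiv K C D := by
  obtain ⟨μ, hμ⟩ := H.nonempty
  obtain ⟨x, hx⟩ := hne
  obtain ⟨U, hU, hxU, hUB⟩ := hsmall x B hB ⟨x, hx⟩
  have hdiff : (B \ U).Nonempty :=
    Set.sdiff_nonempty.2 fun h => (hUB μ hμ).not_ge (μ.apply_mono h)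
  obtain ⟨V, hV, hxV, hVB⟩ := hsmall x (B \ U) (hB.diff hU) hdiff
  have hC : IsClopen (V ∩ (B ∩ U)) := hV.inter (hB.inter hU)
  obtain ⟨D, hD, hDB, hDC⟩ := H.good _ _ hC (hB.diff hU) fun μ hμ =>
    (μ.apply_mono Set.inter_subset_left).trans_lt (hVB μ hμ)
  exact ⟨V ∩ (B ∩ U), D, fun y hy => hy.2.1, hDB.trans Set.sdiff_subset, hC, hD, ⟨x, hxV, hx, hxU⟩,
    Set.disjoint_left.2 fun y hy hyD => (hDB hyD).2 hy.2.2, fun μ hμ => (hDC μ hμ).symm⟩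

end Comparison

/-! ### Towers -/

section Tower

variable {X : Type*} [TopologicalSpace X] [MeasurableSpace X] {K : Set (ProbabilityMeasure X)}

/-- A tower: finitely many disjoint, mutually `K`-equivalent clopen sets, its levels. They are
indexed by all natural numbers, the levels from `height` on being empty. -/
structure Tower (K : Set (ProbabilityMeasure X)) where
  height : ℕ
  level : ℕ → Set X
  height_pos : 0 < height
  isClopen_level : ∀ j, IsClopen (level j)
  kequiv_level : ∀ i < height, ∀ j < height, KEquiv K (level i) (level j)
  level_eq_empty : ∀ j, height ≤ j → level j = ∅
  disjoint_level : Pairwise (Function.onFun Disjoint level)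

noncomputable instance : DecidableEq (Tower K) := Classical.decEq _

namespace Tower

variable {s c d : Tower K} {i j : ℕ} {x : X}

/-- The lowest level of a tower. -/
def base (c : Tower K) : Set X := c.level 0

/-- The highest level of a tower. -/
def top (c : Tower K) : Set X := c.level (c.height - 1)

/-- The union of the levels of a tower. -/
def support (c : Tower K) : Set X := ⋃ j, c.level j

lemma isClopen_base (c : Tower K) : IsClopen c.base := c.isClopen_level 0

lemma level_subset_support (c : Tower K) (j : ℕ) : c.level j ⊆ c.support :=
  Set.subset_iUnion c.level j

lemma lt_height_of_mem (hx : x ∈ c.level j) : j < c.height := by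
  by_contra hj
  simp [c.level_eq_empty j (not_lt.1 hj)] at hx

lemma level_index_unique (hi : x ∈ c.level i) (hj : x ∈ c.level j) : i = j :=
  c.disjoint_level.eq (Set.not_disjoint_iff.2 ⟨x, hi, hj⟩)

lemma level_nonempty (H : Comparison K) (hi : (c.level i).Nonempty) (hj : j < c.height) :
    (c.level j).Nonempty :=
  H.nonempty_of_kequiv (c.isClopen_level i) hi
    (c.kequiv_level i (lt_height_of_mem hi.some_mem) j hj)

lemma level_eq_empty_of_base (H : Comparison K) (h : c.base = ∅) (j : ℕ) : c.level j = ∅ := by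
  by_contra hne
  exact (level_nonempty H (Set.nonempty_iff_ne_empty.2 hne) c.height_pos).ne_empty h

/-- `d` is a slice of `c`: a tower of the same height whose levels are contained in those of `c`. -/
def IsSlice (d c : Tower K) : Prop := d.height = c.height ∧ ∀ j, d.level j ⊆ c.level j

lemma IsSlice.refl (c : Tower K) : c.IsSlice c := ⟨rfl, fun _ => subset_rfl⟩

lemma IsSlice.trans {b : Tower K} (h : d.IsSlice c) (h' : c.IsSlice b) : d.IsSlice b :=
  ⟨h.1.trans h'.1, fun j => (h.2 j).trans (h'.2 j)⟩

lemma IsSlice.top_subset (h : d.IsSlice c) : d.top ⊆ c.top := by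
  rw [top, h.1]
  exact h.2 _

lemma IsSlice.support_subset (h : d.IsSlice c) : d.support ⊆ c.support := Set.iUnion_mono h.2

/-- The slice of a tower formed by given `K`-equivalent clopen subsets of its levels. -/
def slice (c : Tower K) (F : ℕ → Set X) (hsub : ∀ j, F j ⊆ c.level j)
    (hclopen : ∀ j, IsClopen (F j))
    (hequiv : ∀ i < c.height, ∀ j < c.height, KEquiv K (F i) (F j)) : Tower K where
  height := c.height
  level := F
  height_pos := c.height_pos
  isClopen_level := hclopen
  kequiv_level := hequiv
  level_eq_empty j hj := Set.subset_eq_empty (hsub j) (c.level_eq_empty j hj)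
  disjoint_level _ _ hij := (c.disjoint_level hij).mono (hsub _) (hsub _)

/-- Since the levels are `K`-equivalent, goodness matches `E` with subsets of all other levels. -/
lemma exists_cut [OpensMeasurableSpace X] (H : Comparison K) (c : Tower K) (hi : i < c.height)
    {E : Set X} (hE : IsClopen E) (hsub : E ⊆ c.level i) :
    ∃ c₁ c₂ : Tower K, c₁.IsSlice c ∧ c₂.IsSlice c ∧ c₁.level i = E ∧
      ∀ j, c₂.level j = c.level j \ c₁.level j := by
  have hmatch j (hj : j < c.height) : ∃ F ⊆ c.level j, IsClopen F ∧ KEquiv K E F :=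
    H.exists_subset_kequiv (c.isClopen_level i) (c.isClopen_level j) hE hsub
      (c.kequiv_level i hi j hj)
  have hchoice j : ∃ F ⊆ c.level j,
      IsClopen F ∧ (j < c.height → KEquiv K E F) ∧ (j = i → F = E) := by
    by_cases hji : j = i
    · exact ⟨E, hji ▸ hsub, hE, fun _ => .refl E, fun _ => rfl⟩
    by_cases hj : j < c.height
    · obtain ⟨F, hF, hclopen, hEF⟩ := hmatch j hj
      exact ⟨F, hF, hclopen, fun _ => hEF, fun h => absurd h hji⟩
    · exact ⟨∅, Set.empty_subset _, isClopen_empty, fun h => absurd h hj, fun h => absurd h hji⟩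
  choose F hsubF hF hEF hFi using hchoice
  have hequiv j (hj : j < c.height) k (hk : k < c.height) : KEquiv K (F j) (F k) :=
    (hEF j hj).symm.trans (hEF k hk)
  exact ⟨c.slice F hsubF hF hequiv,
    c.slice (fun j => c.level j \ F j) (fun _ => Set.sdiff_subset)
      (fun j => (c.isClopen_level j).diff (hF j))
      (fun j hj k hk => (c.kequiv_level j hj k hk).sdiff (hequiv j hj k hk)
        (hF j).isOpen.measurableSet (hF k).isOpen.measurableSet (hsubF j) (hsubF k)),
    ⟨rfl, hsubF⟩, ⟨rfl, fun _ => Set.sdiff_subset⟩, hFi i rfl, fun _ => rfl⟩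

/-- The tower obtained by putting `c` on top of `s`. -/
def stack (s c : Tower K) (hdisj : Disjoint s.support c.support) (hbase : KEquiv K s.base c.base) :
    Tower K where
  height := s.height + c.height
  level j := if j < s.height then s.level j else c.level (j - s.height)
  height_pos := Nat.add_pos_left s.height_pos _
  isClopen_level j := by
    split_ifs
    exacts [s.isClopen_level j, c.isClopen_level _]
  kequiv_level := by
    have hlevel j (hj : j < s.height + c.height) :
        KEquiv K s.base (if j < s.height then s.level j else c.level (j - s.height)) := by
      split_ifs with h
      · exact s.kequiv_level 0 s.height_pos j h
      · exact hbase.trans (c.kequiv_level 0 c.height_pos _ (by omega))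
    exact fun i hi j hj => (hlevel i hi).symm.trans (hlevel j hj)
  level_eq_empty j hj := by
    rw [if_neg (by omega)]
    exact c.level_eq_empty _ (by omega)
  disjoint_level i j hij := by
    have hsc i j : Disjoint (s.level i) (c.level j) :=
      hdisj.mono (s.level_subset_support i) (c.level_subset_support j)
    simp only [Function.onFun]
    split_ifs
    exacts [s.disjoint_level hij, hsc _ _, (hsc _ _).symm, c.disjoint_level (by omega)]

/-- `d` is a slice of the tower obtained by putting `c` on top of `s`. -/
structure IsStack (d s c : Tower K) : Prop where
  height_eq : d.height = s.height + c.height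
  lower : ∀ j < s.height, d.level j ⊆ s.level j
  upper : ∀ j, d.level (s.height + j) ⊆ c.level j

lemma stack_level_of_lt {hdisj : Disjoint s.support c.support} {hbase : KEquiv K s.base c.base}
    (hj : j < s.height) : (s.stack c hdisj hbase).level j = s.level j := if_pos hj

lemma stack_level_add {hdisj : Disjoint s.support c.support} {hbase : KEquiv K s.base c.base}
    (j : ℕ) : (s.stack c hdisj hbase).level (s.height + j) = c.level j := by
  simp [stack]

lemma isStack_stack (hdisj : Disjoint s.support c.support) (hbase : KEquiv K s.base c.base) :
    (s.stack c hdisj hbase).IsStack s c :=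
  ⟨rfl, fun _ hj => (stack_level_of_lt hj).subset, fun j => (stack_level_add j).subset⟩

lemma IsStack.level_subset (h : d.IsStack s c) (j : ℕ) :
    d.level j ⊆ s.level j ∨ ∃ i, d.level j ⊆ c.level i := by
  rcases lt_or_ge j s.height with hj | hj
  · exact .inl (h.lower j hj)
  · obtain ⟨i, rfl⟩ := Nat.exists_eq_add_of_le hj
    exact .inr ⟨i, h.upper i⟩

lemma support_stack (hdisj : Disjoint s.support c.support) (hbase : KEquiv K s.base c.base) :
    (s.stack c hdisj hbase).support = s.support ∪ c.support := by
  refine (Set.iUnion_subset fun j => ?_).antisymm (Set.union_subset ?_ ?_)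
  · rcases (isStack_stack hdisj hbase).level_subset j with h | ⟨i, h⟩
    · exact (h.trans (s.level_subset_support j)).trans Set.subset_union_left
    · exact (h.trans (c.level_subset_support i)).trans Set.subset_union_right
  · refine Set.iUnion_subset fun j x hx => level_subset_support _ j ?_
    rwa [stack_level_of_lt (lt_height_of_mem hx)]
  · refine Set.iUnion_subset fun j x hx => level_subset_support _ (s.height + j) ?_
    rwa [stack_level_add]

lemma IsStack.mono {s' c' : Tower K} (h : d.IsStack s c) (hs : s.IsSlice s') (hc : c.IsSlice c') :
    d.IsStack s' c' where
  height_eq := by rw [h.height_eq, hs.1, hc.1]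
  lower j hj := (h.lower j (hs.1 ▸ hj)).trans (hs.2 j)
  upper j := hs.1 ▸ (h.upper j).trans (hc.2 j)

lemma IsStack.top_subset (h : d.IsStack s c) : d.top ⊆ c.top := by
  rw [top, h.height_eq, Nat.add_sub_assoc c.height_pos]
  exact h.upper _

lemma IsStack.base_subset (h : d.IsStack s c) : d.base ⊆ s.base := h.lower 0 s.height_pos

end Tower

end Tower

/-! ### Families of towers and their refinements -/

section Family

variable {X : Type*} [TopologicalSpace X] [MeasurableSpace X] {K : Set (ProbabilityMeasure X)}

/-- A finite family of towers; the Kakutani–Rokhlin partitions of `X` are the families satisfying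
`TowerFamily.IsPartition`. -/
abbrev TowerFamily (K : Set (ProbabilityMeasure X)) := Finset (Tower K)

namespace TowerFamily

variable {L L' M M' N : TowerFamily K} {c d s : Tower K} {x y : X}

/-- The union of the bases of the towers of a family. -/
def base (L : TowerFamily K) : Set X := ⋃ c ∈ L, c.base

/-- The union of the tops of the towers of a family. -/
def top (L : TowerFamily K) : Set X := ⋃ c ∈ L, c.top

/-- The union of the supports of the towers of a family. -/
def support (L : TowerFamily K) : Set X := ⋃ c ∈ L, c.support

/-- The towers of the family have pairwise disjoint supports. -/
def IsDisjoint (L : TowerFamily K) : Prop := (L : Set (Tower K)).PairwiseDisjoint Tower.support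

/-- The levels of the towers of the family partition `X`, up to empty levels. -/
structure IsPartition (L : TowerFamily K) : Prop where
  isDisjoint : L.IsDisjoint
  support_eq : L.support = Set.univ

/-- The relation between `x` and its image which `L` imposes on the homeomorphism under
construction: `y` lies one level above `x`, or `x` lies in the top and `y` in the base of `L`. -/
def Step (L : TowerFamily K) (x y : X) : Prop :=
  (∃ c ∈ L, ∃ j, x ∈ c.level j ∧ y ∈ c.level (j + 1)) ∨ (x ∈ L.top ∧ y ∈ L.base)

lemma base_subset_of_mem (h : c ∈ L) : c.base ⊆ L.base := Set.subset_biUnion_of_mem h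

lemma top_subset_of_mem (h : c ∈ L) : c.top ⊆ L.top := Set.subset_biUnion_of_mem h

lemma support_subset_of_mem (h : c ∈ L) : c.support ⊆ L.support := Set.subset_biUnion_of_mem h

lemma mem_base : x ∈ L.base ↔ ∃ c ∈ L, x ∈ c.base := by
  simp only [base, Set.mem_iUnion, exists_prop]

lemma mem_top : x ∈ L.top ↔ ∃ c ∈ L, x ∈ c.top := by
  simp only [top, Set.mem_iUnion, exists_prop]

lemma mem_support : x ∈ L.support ↔ ∃ c ∈ L, ∃ j, x ∈ c.level j := by
  simp only [support, Tower.support, Set.mem_iUnion, exists_prop]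

lemma isClopen_base (L : TowerFamily K) : IsClopen L.base :=
  isClopen_biUnion_finset fun c _ => c.isClopen_base

lemma isClopen_top (L : TowerFamily K) : IsClopen L.top :=
  isClopen_biUnion_finset fun c _ => c.isClopen_level _

lemma base_union : TowerFamily.base (L ∪ M) = L.base ∪ M.base := Finset.set_biUnion_union ..

lemma base_insert : TowerFamily.base (insert c L) = c.base ∪ L.base :=
  Finset.set_biUnion_insert ..

lemma base_singleton (c : Tower K) : TowerFamily.base {c} = c.base :=
  Finset.set_biUnion_singleton ..

lemma support_union : TowerFamily.support (L ∪ M) = L.support ∪ M.support :=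
  Finset.set_biUnion_union ..

lemma support_insert : TowerFamily.support (insert c L) = c.support ∪ L.support :=
  Finset.set_biUnion_insert ..

lemma support_singleton (c : Tower K) : TowerFamily.support {c} = c.support :=
  Finset.set_biUnion_singleton ..

lemma isDisjoint_singleton (c : Tower K) : TowerFamily.IsDisjoint {c} := by
  simp [IsDisjoint]

lemma IsDisjoint.subset (hL : L.IsDisjoint) (h : M ⊆ L) : M.IsDisjoint :=
  Set.PairwiseDisjoint.subset hL (Finset.coe_subset.2 h)

lemma IsDisjoint.support_disjoint (hL : L.IsDisjoint) (hM : M ⊆ L) (hN : N ⊆ L)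
    (h : Disjoint M N) : Disjoint M.support N.support := by
  simp only [support, Set.disjoint_iUnion_left, Set.disjoint_iUnion_right]
  exact fun c hc d hd => hL (hM hd) (hN hc) fun hcd => Finset.disjoint_left.1 h (hcd ▸ hd) hc

lemma IsDisjoint.support_disjoint_of_notMem (hL : L.IsDisjoint) (hc : c ∈ L) (hM : M ⊆ L)
    (hcM : c ∉ M) : Disjoint c.support M.support := by
  rw [← support_singleton]
  exact hL.support_disjoint (Finset.singleton_subset_iff.2 hc) hM
    (Finset.disjoint_singleton_left.2 hcM)

lemma IsDisjoint.union (hL : L.IsDisjoint) (hM : M.IsDisjoint)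
    (h : Disjoint L.support M.support) : TowerFamily.IsDisjoint (L ∪ M) := by
  rw [IsDisjoint, Finset.coe_union]
  exact Set.PairwiseDisjoint.union hL hM fun c hc d hd _ =>
    h.mono (support_subset_of_mem hc) (support_subset_of_mem hd)

lemma IsDisjoint.position_unique (hL : L.IsDisjoint) {i j : ℕ} (hc : c ∈ L) (hd : d ∈ L)
    (hi : x ∈ c.level i) (hj : x ∈ d.level j) : c = d ∧ i = j := by
  obtain rfl : c = d := hL.elim hc hd <| Set.not_disjoint_iff.2
    ⟨x, c.level_subset_support i hi, d.level_subset_support j hj⟩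
  exact ⟨rfl, Tower.level_index_unique hi hj⟩

lemma Step.mono (h : M.Step x y) (hML : M ⊆ L) : L.Step x y := by
  rcases h with ⟨c, hc, hstep⟩ | ⟨hx, hy⟩
  · exact .inl ⟨c, hML hc, hstep⟩
  · exact .inr ⟨Set.biUnion_subset_biUnion_left hML hx, Set.biUnion_subset_biUnion_left hML hy⟩

/-- `L'` arises from `L` by cutting and stacking: it fills the same space, its base and top shrink,
its levels are contained in levels of `L`, and moving up in `L'` is a step of `L`. -/
structure Refines (L' L : TowerFamily K) : Prop where
  isDisjoint : L'.IsDisjoint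
  support_eq : L'.support = L.support
  base_subset : L'.base ⊆ L.base
  top_subset : L'.top ⊆ L.top
  level_subset : ∀ d ∈ L', ∀ j, ∃ c ∈ L, ∃ i, d.level j ⊆ c.level i
  step_of_level : ∀ d ∈ L', ∀ j x y, x ∈ d.level j → y ∈ d.level (j + 1) → L.Step x y

lemma Refines.refl (hL : L.IsDisjoint) : L.Refines L :=
  ⟨hL, rfl, subset_rfl, subset_rfl, fun d hd j => ⟨d, hd, j, subset_rfl⟩,
    fun d hd j _ _ hx hy => .inl ⟨d, hd, j, hx, hy⟩⟩

lemma Refines.step (h : L'.Refines L) (hxy : L'.Step x y) : L.Step x y := by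
  rcases hxy with ⟨d, hd, j, hx, hy⟩ | ⟨hx, hy⟩
  · exact h.step_of_level d hd j x y hx hy
  · exact .inr ⟨h.top_subset hx, h.base_subset hy⟩

lemma Refines.trans (h : N.Refines M) (h' : M.Refines L) : N.Refines L where
  isDisjoint := h.isDisjoint
  support_eq := h.support_eq.trans h'.support_eq
  base_subset := h.base_subset.trans h'.base_subset
  top_subset := h.top_subset.trans h'.top_subset
  level_subset d hd j := by
    obtain ⟨c, hc, i, hi⟩ := h.level_subset d hd j
    obtain ⟨b, hb, k, hk⟩ := h'.level_subset c hc i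
    exact ⟨b, hb, k, hi.trans hk⟩
  step_of_level d hd j x y hx hy := h'.step (h.step_of_level d hd j x y hx hy)

lemma Refines.isPartition (h : L'.Refines L) (hL : L.IsPartition) : L'.IsPartition :=
  ⟨h.isDisjoint, h.support_eq.trans hL.support_eq⟩

lemma Refines.biUnion {ι : Type*} {s : Finset ι} {M N : ι → TowerFamily K}
    (hN : (s : Set ι).PairwiseDisjoint fun i => (N i).support) (h : ∀ i ∈ s, (M i).Refines (N i)) :
    TowerFamily.Refines (s.biUnion M) (s.biUnion N) where
  isDisjoint := by
    intro c hc d hd hcd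
    obtain ⟨i, hi, hci⟩ := Finset.mem_biUnion.1 hc
    obtain ⟨j, hj, hdj⟩ := Finset.mem_biUnion.1 hd
    rcases eq_or_ne i j with rfl | hij
    · exact (h i hi).isDisjoint hci hdj hcd
    · exact (hN hi hj hij).mono
        ((support_subset_of_mem hci).trans (h i hi).support_eq.subset)
        ((support_subset_of_mem hdj).trans (h j hj).support_eq.subset)
  support_eq := by
    simp only [support, Finset.set_biUnion_biUnion]
    exact Set.iUnion₂_congr fun i hi => (h i hi).support_eq
  base_subset := by
    simp only [base, Finset.set_biUnion_biUnion]
    exact Set.iUnion₂_mono fun i hi => (h i hi).base_subset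
  top_subset := by
    simp only [top, Finset.set_biUnion_biUnion]
    exact Set.iUnion₂_mono fun i hi => (h i hi).top_subset
  level_subset d hd j := by
    obtain ⟨i, hi, hdi⟩ := Finset.mem_biUnion.1 hd
    obtain ⟨c, hc, hlevel⟩ := (h i hi).level_subset d hdi j
    exact ⟨c, Finset.mem_biUnion.2 ⟨i, hi, hc⟩, hlevel⟩
  step_of_level d hd j x y hx hy := by
    obtain ⟨i, hi, hdi⟩ := Finset.mem_biUnion.1 hd
    exact ((h i hi).step_of_level d hdi j x y hx hy).mono (Finset.subset_biUnion_of_mem N hi)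

lemma Refines.biUnion_towers {f : Tower K → TowerFamily K} (hL : L.IsDisjoint)
    (h : ∀ c ∈ L, (f c).Refines {c}) : TowerFamily.Refines (L.biUnion f) L := by
  have := Refines.biUnion (N := fun c => {c})
    (by simpa only [support_singleton, IsDisjoint] using hL) h
  rwa [Finset.biUnion_singleton_eq_self] at this

lemma Refines.union (h : L'.Refines L) (h' : M'.Refines M) (hLM : Disjoint L.support M.support) :
    TowerFamily.Refines (L' ∪ M') (L ∪ M) := by
  have := Refines.biUnion (s := Finset.univ) (M := fun b => cond b L' M')
    (N := fun b => cond b L M)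
    (by simp [Set.PairwiseDisjoint, Set.pairwise_insert, Function.onFun, hLM, hLM.symm])
    (by simp [h, h'])
  have hunion (P Q : TowerFamily K) : Finset.univ.biUnion (fun b => cond b P Q) = P ∪ Q := by
    ext
    simp
  rwa [hunion, hunion] at this

lemma Refines.glue (h : TowerFamily.Refines (M ∪ {c}) L) (hcM : Disjoint M.support c.support)
    (h' : N.Refines (insert c M')) (hM' : M'.IsDisjoint) (hLM' : Disjoint L.support M'.support) :
    TowerFamily.Refines (M ∪ N) (L ∪ M') := by
  have hMM' : Disjoint M.support M'.support :=
    hLM'.mono_left ((support_union (M := {c}) ▸ Set.subset_union_left).trans h.support_eq.subset)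
  have hrest : TowerFamily.Refines (M ∪ N) (M ∪ insert c M') :=
    (refl (h.isDisjoint.subset Finset.subset_union_left)).union h'
      (support_insert (c := c) ▸ Set.disjoint_union_right.2 ⟨hcM, hMM'⟩)
  rw [Finset.insert_eq, ← Finset.union_assoc] at hrest
  exact hrest.trans (h.union (refl hM') hLM')

lemma Refines.insert (h : L'.Refines L) (hcL : Disjoint c.support L.support) :
    TowerFamily.Refines (insert c L') (insert c L) := by
  rw [Finset.insert_eq, Finset.insert_eq]
  exact (refl (isDisjoint_singleton c)).union h (by rwa [support_singleton])

lemma Refines.of_slices (hM : M.IsDisjoint) (hslice : ∀ d ∈ M, d.IsSlice c)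
    (hlevel : ∀ j, c.level j ⊆ ⋃ d ∈ M, d.level j) : M.Refines {c} where
  isDisjoint := hM
  support_eq := by
    rw [support_singleton]
    refine (Set.iUnion₂_subset fun d hd => (hslice d hd).support_subset).antisymm ?_
    refine Set.iUnion_subset fun j => (hlevel j).trans ?_
    exact Set.iUnion₂_mono fun d _ => d.level_subset_support j
  base_subset := Set.iUnion₂_subset fun d hd =>
    ((hslice d hd).2 0).trans (base_subset_of_mem (Finset.mem_singleton_self c))
  top_subset := Set.iUnion₂_subset fun d hd =>
    (hslice d hd).top_subset.trans (top_subset_of_mem (Finset.mem_singleton_self c))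
  level_subset d hd j := ⟨c, Finset.mem_singleton_self c, j, (hslice d hd).2 j⟩
  step_of_level d hd j x y hx hy :=
    .inl ⟨c, Finset.mem_singleton_self c, j, (hslice d hd).2 j hx, (hslice d hd).2 _ hy⟩

lemma Refines.empty (H : Comparison K) (hc : c.base = ∅) : TowerFamily.Refines ∅ {c} :=
  .of_slices (by simp [IsDisjoint]) (by simp) fun j => by simp [c.level_eq_empty_of_base H hc j]

lemma exists_refines_cut [OpensMeasurableSpace X] (H : Comparison K) (c : Tower K) {i : ℕ}
    (hi : i < c.height) {E : Set X} (hE : IsClopen E) (hsub : E ⊆ c.level i) :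
    ∃ c₁ c₂ : Tower K, TowerFamily.Refines {c₁, c₂} {c} ∧ Disjoint c₁.support c₂.support ∧
      c₁.IsSlice c ∧ c₂.IsSlice c ∧ c₁.level i = E ∧ c₂.level i = c.level i \ E := by
  obtain ⟨c₁, c₂, h₁, h₂, hE₁, hlevel⟩ := c.exists_cut H hi hE hsub
  have hdisj : Disjoint c₁.support c₂.support := by
    refine Set.disjoint_iUnion_left.2 fun j => Set.disjoint_iUnion_right.2 fun k => ?_
    rcases eq_or_ne j k with rfl | hjk
    · rw [hlevel]
      exact Set.disjoint_sdiff_right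
    · exact (c.disjoint_level hjk).mono (h₁.2 j) (h₂.2 k)
  refine ⟨c₁, c₂, .of_slices ?_ (by simp [h₁, h₂]) fun j => ?_, hdisj, h₁, h₂, hE₁,
    by rw [hlevel, hE₁]⟩
  · exact (isDisjoint_singleton c₁).union (isDisjoint_singleton c₂)
      (by simpa only [support_singleton])
  · simp [hlevel]

lemma refines_stack (hdisj : Disjoint s.support c.support) (hbase : KEquiv K s.base c.base) :
    TowerFamily.Refines {s.stack c hdisj hbase} {s, c} := by
  have hs : s ∈ ({s, c} : TowerFamily K) := by simp
  have hc : c ∈ ({s, c} : TowerFamily K) := by simp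
  have hstack := Tower.isStack_stack hdisj hbase
  refine ⟨isDisjoint_singleton _, ?_, ?_, ?_, ?_, ?_⟩
  · rw [support_singleton, Tower.support_stack, Finset.insert_eq, support_union,
      support_singleton, support_singleton]
  · exact Set.iUnion₂_subset fun d hd =>
      Finset.mem_singleton.1 hd ▸ hstack.base_subset.trans (base_subset_of_mem hs)
  · exact Set.iUnion₂_subset fun d hd =>
      Finset.mem_singleton.1 hd ▸ hstack.top_subset.trans (top_subset_of_mem hc)
  · rintro d hd j
    obtain rfl := Finset.mem_singleton.1 hd
    rcases hstack.level_subset j with h | ⟨i, h⟩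
    exacts [⟨s, hs, j, h⟩, ⟨c, hc, i, h⟩]
  · rintro d hd j x y hx hy
    obtain rfl := Finset.mem_singleton.1 hd
    rcases lt_trichotomy (j + 1) s.height with hj | hj | hj
    · exact .inl ⟨s, hs, j, hstack.lower j (by omega) hx, hstack.lower _ hj hy⟩
    · have hxs : x ∈ s.top := by
        rw [Tower.top, ← hj]
        exact hstack.lower j (by omega) hx
      exact .inr ⟨top_subset_of_mem hs hxs, base_subset_of_mem hc (hstack.upper 0 (hj ▸ hy))⟩
    · obtain ⟨i, rfl⟩ := Nat.exists_eq_add_of_le (Nat.lt_succ_iff.1 hj)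
      exact .inl ⟨c, hc, i, hstack.upper i hx, hstack.upper (i + 1) hy⟩

end TowerFamily

end Family

/-! ### Compatible refinements -/

section IsPure

variable {X : Type*} {A B W : Set X}

/-- `W` does not split `A`. -/
def IsPure (A W : Set X) : Prop := A ⊆ W ∨ Disjoint A W

lemma IsPure.mono (h : IsPure B W) (hAB : A ⊆ B) : IsPure A W :=
  h.imp hAB.trans fun hdisj => hdisj.mono_left hAB

lemma IsPure.subset_of_mem {x : X} (h : IsPure A W) (hxA : x ∈ A) (hxW : x ∈ W) :
    A ⊆ W :=
  h.resolve_right fun hdisj => Set.disjoint_left.1 hdisj hxA hxW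

lemma IsPure.mem_iff {x : X} (h : IsPure A W) (hx : x ∈ A) : (A ∩ W).Nonempty ↔ x ∈ W :=
  ⟨fun ⟨_, hyA, hyW⟩ => h.subset_of_mem hyA hyW hx, fun hxW => ⟨x, hx, hxW⟩⟩

lemma IsPure.inter_nonempty_iff (h : IsPure B W) (hAB : A ⊆ B) (hne : A.Nonempty) :
    (A ∩ W).Nonempty ↔ (B ∩ W).Nonempty := by
  refine ⟨.mono (Set.inter_subset_inter_left W hAB), fun ⟨x, hxB, hxW⟩ => ?_⟩
  rwa [Set.inter_eq_self_of_subset_left (hAB.trans (h.subset_of_mem hxB hxW))]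

end IsPure

section Compatible

variable {X : Type*} [TopologicalSpace X] [MeasurableSpace X] {K : Set (ProbabilityMeasure X)}

namespace TowerFamily

variable {L L' : TowerFamily K} {W B : Set X}

/-- `W` splits no level of `L`. -/
def Compatible (L : TowerFamily K) (W : Set X) : Prop := ∀ c ∈ L, ∀ j, IsPure (c.level j) W

lemma Refines.compatible (h : L'.Refines L) (hL : L.Compatible W) : L'.Compatible W := by
  intro d hd j
  obtain ⟨c, hc, i, hi⟩ := h.level_subset d hd j
  exact (hL c hc i).mono hi

variable [OpensMeasurableSpace X]

lemma exists_refines_isPure_level (H : Comparison K) (c : Tower K) (hW : IsClopen W) (j : ℕ) :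
    ∃ M : TowerFamily K, M.Refines {c} ∧ ∀ d ∈ M, d.IsSlice c ∧ IsPure (d.level j) W := by
  by_cases hj : j < c.height
  · obtain ⟨c₁, c₂, href, -, h₁, h₂, hin, hout⟩ := exists_refines_cut H c hj
      ((c.isClopen_level j).inter hW) Set.inter_subset_left
    refine ⟨_, href, ?_⟩
    simp only [Finset.forall_mem_insert, Finset.mem_singleton, forall_eq]
    refine ⟨⟨h₁, .inl (hin ▸ Set.inter_subset_right)⟩, h₂, .inr ?_⟩
    rw [hout, Set.sdiff_self_inter]
    exact Set.disjoint_sdiff_left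
  · refine ⟨_, .refl (isDisjoint_singleton c), ?_⟩
    simp [Tower.IsSlice.refl, IsPure, c.level_eq_empty j (not_lt.1 hj)]

lemma exists_refines_isPure_levels (H : Comparison K) (hL : L.IsDisjoint) (hW : IsClopen W) :
    ∀ n : ℕ, ∃ L' : TowerFamily K, L'.Refines L ∧
      ∀ d ∈ L', (∃ c ∈ L, d.IsSlice c) ∧ ∀ j < n, IsPure (d.level j) W
  | 0 => ⟨L, .refl hL, fun d hd => ⟨⟨d, hd, .refl d⟩, fun j hj => absurd hj (Nat.not_lt_zero j)⟩⟩
  | n + 1 => by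
    obtain ⟨L', href, hL'⟩ := exists_refines_isPure_levels H hL hW n
    choose f hf hslice using fun c => exists_refines_isPure_level H c hW n
    refine ⟨L'.biUnion f, (Refines.biUnion_towers href.isDisjoint fun c _ => hf c).trans href, ?_⟩
    intro e he
    obtain ⟨d, hd, hed⟩ := Finset.mem_biUnion.1 he
    obtain ⟨⟨c, hc, hdc⟩, hpure⟩ := hL' d hd
    obtain ⟨hslice, hn⟩ := hslice d e hed
    refine ⟨⟨c, hc, hslice.trans hdc⟩, fun j hj => ?_⟩
    rcases Nat.lt_succ_iff_lt_or_eq.1 hj with hj | rfl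
    exacts [(hpure j hj).mono (hslice.2 j), hn]

lemma exists_refines_compatible (H : Comparison K) (hL : L.IsDisjoint) (hW : IsClopen W) :
    ∃ L' : TowerFamily K, L'.Refines L ∧ L'.Compatible W := by
  obtain ⟨L', href, hL'⟩ := exists_refines_isPure_levels H hL hW (L.sup Tower.height)
  refine ⟨L', href, fun d hd j => ?_⟩
  obtain ⟨⟨c, hc, hslice⟩, hpure⟩ := hL' d hd
  rcases lt_or_ge j (L.sup Tower.height) with hj | hj
  · exact hpure j hj
  · have hheight : d.height ≤ j := hslice.1 ▸ (Finset.le_sup hc).trans hj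
    simp [d.level_eq_empty j hheight, IsPure]

lemma exists_refines_compatible_finset (H : Comparison K) (hL : L.IsDisjoint) {ι : Type*}
    {W : ι → Set X} (hW : ∀ i, IsClopen (W i)) (t : Finset ι) :
    ∃ L' : TowerFamily K, L'.Refines L ∧ ∀ i ∈ t, L'.Compatible (W i) := by
  classical
  induction t using Finset.induction_on with
  | empty => exact ⟨L, .refl hL, by simp⟩
  | insert i t _ ih =>
    obtain ⟨L₁, href₁, hL₁⟩ := ih
    obtain ⟨L₂, href₂, hL₂⟩ := exists_refines_compatible H href₁.isDisjoint (hW i)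
    refine ⟨L₂, href₂.trans href₁, Finset.forall_mem_insert .. |>.2 ⟨hL₂, fun j hj => ?_⟩⟩
    exact href₂.compatible (hL₁ j hj)

lemma exists_refines_base_lt [CompactSpace X] (H : Comparison K) (hsmall : HasSmallNeighborhoods K)
    (hL : L.IsDisjoint) (hB : IsClopen B) (hne : B.Nonempty) :
    ∃ L' : TowerFamily K, L'.Refines L ∧ ∀ c ∈ L', ∀ μ ∈ K, μ c.base < μ B := by
  choose C hC hxC hlt using fun x => hsmall x B hB hne
  obtain ⟨t, ht⟩ := isCompact_univ.elim_finite_subcover C (fun x => (hC x).isOpen)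
    fun x _ => Set.mem_iUnion.2 ⟨x, hxC x⟩
  obtain ⟨L', href, hL'⟩ := exists_refines_compatible_finset H hL hC t
  refine ⟨L', href, fun c hc μ hμ => ?_⟩
  rcases c.base.eq_empty_or_nonempty with hempty | ⟨x, hx⟩
  · rw [hempty, μ.coeFn_empty]
    exact H.fullSupport μ hμ B hB.isOpen hne
  · obtain ⟨y, hy, hxy⟩ := Set.mem_iUnion₂.1 (ht (Set.mem_univ x))
    exact (μ.apply_mono ((hL' y hy c hc 0).subset_of_mem hx hxy)).trans_lt (hlt y μ hμ)

end TowerFamily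

end Compatible

/-! ### Absorbing towers -/

section Absorb

variable {X : Type*} [TopologicalSpace X] [MeasurableSpace X] [OpensMeasurableSpace X]
  {K : Set (ProbabilityMeasure X)}

namespace TowerFamily

variable {L M S : TowerFamily K} {c s : Tower K} {C D E F : Set X}

lemma exists_refines_transplant (H : Comparison K) (hdisj : Disjoint s.support c.support)
    (hE : IsClopen E) (hEs : E ⊆ s.base) (hF : IsClopen F) (hFc : F ⊆ c.base)
    (hEF : KEquiv K E F) :
    ∃ t s' c' : Tower K, TowerFamily.Refines ({t, s'} ∪ {c'}) {s, c} ∧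
      Disjoint (TowerFamily.support {t, s'}) c'.support ∧ t.IsStack s c ∧ s'.IsSlice s ∧
      c'.IsSlice c ∧ t.base = E ∧ s'.base = s.base \ E ∧ c'.base = c.base \ F := by
  obtain ⟨s₁, s₂, hrefs, hs₁₂, hs₁, hs₂, hbases₁, hbases₂⟩ :=
    exists_refines_cut H s s.height_pos hE hEs
  obtain ⟨c₁, c₂, hrefc, hc₁₂, hc₁, hc₂, hbasec₁, hbasec₂⟩ :=
    exists_refines_cut H c c.height_pos hF hFc
  have hdisj' {a b : Tower K} (ha : a.IsSlice s) (hb : b.IsSlice c) :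
      Disjoint a.support b.support := hdisj.mono ha.support_subset hb.support_subset
  have hequiv : KEquiv K s₁.base c₁.base := by rwa [Tower.base, hbases₁, Tower.base, hbasec₁]
  have hcut : TowerFamily.Refines ({s₁, c₁} ∪ {s₂, c₂}) ({s} ∪ {c}) := by
    have h := hrefs.union hrefc (by simpa only [support_singleton])
    simp only [Finset.insert_eq] at h ⊢
    rwa [Finset.union_union_union_comm]
  have hdisj₂ : Disjoint (TowerFamily.support {s₁, c₁}) (TowerFamily.support {s₂, c₂}) := by
    simp only [support_insert, support_singleton, Set.disjoint_union_left,
      Set.disjoint_union_right]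
    exact ⟨⟨hs₁₂, (hdisj' hs₂ hc₁).symm⟩, hdisj' hs₁ hc₂, hc₁₂⟩
  have hstack : TowerFamily.Refines ({s₁.stack c₁ (hdisj' hs₁ hc₁) hequiv} ∪ {s₂, c₂})
      ({s₁, c₁} ∪ {s₂, c₂}) :=
    (refines_stack _ _).union (.refl (hcut.isDisjoint.subset Finset.subset_union_right)) hdisj₂
  refine ⟨s₁.stack c₁ (hdisj' hs₁ hc₁) hequiv, s₂, c₂, ?_, ?_,
    (Tower.isStack_stack _ _).mono hs₁ hc₁, hs₂, hc₂, ?_, hbases₂, hbasec₂⟩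
  · have h := hstack.trans hcut
    simp only [Finset.insert_eq, Finset.union_assoc] at h ⊢
    exact h
  · simp only [support_insert, support_singleton, Tower.support_stack, Set.disjoint_union_left]
    exact ⟨⟨hdisj' hs₁ hc₂, hc₁₂⟩, hdisj' hs₂ hc₂⟩
  · exact (Tower.stack_level_of_lt s₁.height_pos).trans hbases₁

lemma exists_refines_absorb_singleton (H : Comparison K) (hdisj : Disjoint s.support c.support)
    (hC : IsClopen C) (hCc : KEquiv K C c.base) :
    ∃ t s' c' : Tower K, TowerFamily.Refines ({t, s'} ∪ {c'}) {s, c} ∧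
      Disjoint (TowerFamily.support {t, s'}) c'.support ∧ t.IsStack s c ∧ s'.IsSlice s ∧
      c'.IsSlice c ∧ t.base ∪ s'.base = s.base ∧ Disjoint s'.base C ∧
      KEquiv K (C \ s.base) c'.base := by
  have hE : IsClopen (C ∩ s.base) := hC.inter s.isClopen_base
  obtain ⟨F, hFc, hF, hEF⟩ :=
    H.exists_subset_kequiv hC c.isClopen_base hE Set.inter_subset_left hCc
  obtain ⟨t, s', c', href, hdisj', ht, hs', hc', hbaset, hbases, hbasec⟩ :=
    exists_refines_transplant H hdisj hE Set.inter_subset_right hF hFc hEF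
  refine ⟨t, s', c', href, hdisj', ht, hs', hc', ?_, ?_, ?_⟩
  · rw [hbaset, hbases, Set.union_sdiff_cancel Set.inter_subset_right]
  · rw [hbases, Set.inter_comm, Set.sdiff_self_inter]
    exact Set.disjoint_sdiff_left
  · rw [hbasec, ← Set.sdiff_self_inter]
    exact hCc.sdiff hEF hE.isOpen.measurableSet hF.isOpen.measurableSet Set.inter_subset_left hFc

lemma exists_refines_absorb (H : Comparison K) (hS : S.IsDisjoint)
    (hcS : Disjoint c.support S.support) (hC : IsClopen C) (hCS : C ⊆ S.base)
    (hCc : KEquiv K C c.base) :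
    ∃ S' : TowerFamily K, S'.Refines (insert c S) ∧ S'.base = S.base ∧
      ∀ d ∈ S', (∃ s ∈ S, d.IsSlice s ∧ Disjoint d.base C) ∨ ∃ s ∈ S, d.IsStack s c := by
  induction S using Finset.induction_on generalizing c C with
  | empty =>
    have hempty : C = ∅ := by simpa [base] using hCS
    refine ⟨∅, ?_, rfl, by simp⟩
    refine .empty H (Set.not_nonempty_iff_eq_empty.1 fun hne => ?_)
    exact (H.nonempty_of_kequiv c.isClopen_base hne hCc.symm).ne_empty hempty
  | insert s S hs ih =>
    rw [support_insert, Set.disjoint_union_right] at hcS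
    rw [base_insert] at hCS
    have hsS : Disjoint s.support (support S) :=
      hS.support_disjoint_of_notMem (Finset.mem_insert_self s S) (Finset.subset_insert s S) hs
    obtain ⟨t, s', c', href, hdisj, ht, hs', hc', hbases, hs'C, hCc'⟩ :=
      exists_refines_absorb_singleton H hcS.1.symm hC hCc
    obtain ⟨S', hrefS, hbaseS, hS'⟩ := ih (hS.subset (Finset.subset_insert s S))
      (hcS.2.mono_left hc'.support_subset) (hC.diff s.isClopen_base) (Set.sdiff_subset_iff.2 hCS)
      hCc'
    have hsc : Disjoint (TowerFamily.support {s, c}) (support S) := by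
      rw [support_insert, support_singleton]
      exact Set.disjoint_union_left.2 ⟨hsS, hcS.2⟩
    refine ⟨{t, s'} ∪ S', ?_, ?_, ?_⟩
    · have h := href.glue hdisj hrefS (hS.subset (Finset.subset_insert s S)) hsc
      rwa [Finset.insert_union s, Finset.singleton_union, Finset.insert_comm] at h
    · rw [base_union, hbaseS, base_insert, base_insert, base_singleton, hbases]
    · intro d hd
      simp only [Finset.mem_union, Finset.mem_insert, Finset.mem_singleton] at hd
      rcases hd with (rfl | rfl) | hd
      · exact .inr ⟨s, Finset.mem_insert_self s S, ht⟩
      · exact .inl ⟨s, Finset.mem_insert_self s S, hs', hs'C⟩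
      · rcases hS' d hd with ⟨r, hr, hslice, hdC⟩ | ⟨r, hr, hstack⟩
        · refine .inl ⟨r, Finset.mem_insert_of_mem hr, hslice, ?_⟩
          have hds : Disjoint d.base s.base := hsS.symm.mono
            (((d.level_subset_support 0).trans hslice.support_subset).trans
              (support_subset_of_mem hr)) (s.level_subset_support 0)
          exact (hdC.union_right hds).mono_right (Set.subset_sdiff_union C s.base)
        · exact .inr ⟨r, Finset.mem_insert_of_mem hr, hstack.mono (.refl r) hc'⟩

/-- Absorbing `c` over the whole base of `S` puts a piece of `c` on top of every tower, which
controls the top of the result. -/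
lemma exists_refines_absorb_top (H : Comparison K) (hS : S.IsDisjoint)
    (hcS : Disjoint c.support S.support) (h : KEquiv K S.base c.base) :
    ∃ S' : TowerFamily K, S'.Refines (insert c S) ∧ S'.base = S.base ∧ S'.top ⊆ c.top := by
  obtain ⟨S', href, hbase, hS'⟩ :=
    exists_refines_absorb H hS hcS S.isClopen_base subset_rfl h
  refine ⟨S', href, hbase, Set.iUnion₂_subset fun d hd => ?_⟩
  rcases hS' d hd with ⟨-, -, -, hdisj⟩ | ⟨s, -, hstack⟩
  · have hempty : d.base = ∅ := disjoint_self.1 (hdisj.mono_right (hbase ▸ base_subset_of_mem hd))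
    rw [Tower.top, d.level_eq_empty_of_base H hempty]
    exact Set.empty_subset _
  · exact hstack.top_subset

lemma exists_refines_absorb_family (H : Comparison K) (hM : M.IsDisjoint) (hS : S.IsDisjoint)
    (hMS : Disjoint M.support S.support) (hlt : ∀ c ∈ M, ∀ μ ∈ K, μ c.base < μ S.base) :
    ∃ S' : TowerFamily K, S'.Refines (M ∪ S) ∧ S'.base = S.base := by
  induction M using Finset.induction_on with
  | empty => exact ⟨S, by simpa using Refines.refl hS, rfl⟩
  | insert c M hcM ih =>
    rw [support_insert, Set.disjoint_union_left] at hMS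
    obtain ⟨S₁, href₁, hbase₁⟩ := ih (hM.subset (Finset.subset_insert c M)) hMS.2
      fun d hd => hlt d (Finset.mem_insert_of_mem hd)
    have hcS₁ : Disjoint c.support S₁.support := by
      rw [href₁.support_eq, support_union]
      exact Set.disjoint_union_right.2 ⟨hM.support_disjoint_of_notMem
        (Finset.mem_insert_self c M) (Finset.subset_insert c M) hcM, hMS.1⟩
    obtain ⟨C, hC, hCS, hCc⟩ := H.good _ _ c.isClopen_base S.isClopen_base
      (hlt c (Finset.mem_insert_self c M))
    obtain ⟨S₂, href₂, hbase₂, -⟩ :=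
      exists_refines_absorb H href₁.isDisjoint hcS₁ hC (hbase₁ ▸ hCS) hCc
    refine ⟨S₂, href₂.trans ?_, hbase₂.trans hbase₁⟩
    rw [Finset.insert_union]
    exact href₁.insert (href₁.support_eq ▸ hcS₁)

lemma exists_refines_cut_of_mem (H : Comparison K) (hL : L.IsDisjoint) (hc : c ∈ L)
    (hC : IsClopen C) (hCc : C ⊆ c.base) :
    ∃ (d : Tower K) (R : TowerFamily K), TowerFamily.Refines (insert d R) L ∧
      Disjoint d.support R.support ∧ d.IsSlice c ∧ d.base = C ∧
      ∃ e ∈ R, e.IsSlice c ∧ e.base = c.base \ C := by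
  obtain ⟨d, e, href, hde, hd, he, hbased, hbasee⟩ := exists_refines_cut H c c.height_pos hC hCc
  have hcL : Disjoint c.support (support (L.erase c)) :=
    hL.support_disjoint_of_notMem hc (Finset.erase_subset c L) (Finset.notMem_erase c L)
  refine ⟨d, insert e (L.erase c), ?_, ?_, hd, hbased, e, Finset.mem_insert_self .., he, hbasee⟩
  · have h := href.union (.refl (hL.subset (Finset.erase_subset c L)))
      (by rwa [support_singleton])
    rwa [Finset.insert_union, Finset.singleton_union, Finset.singleton_union,
      Finset.insert_erase hc] at h
  · rw [support_insert]
    exact Set.disjoint_union_right.2 ⟨hde, hcL.mono_left hd.support_subset⟩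

/-- Cut out of `c` two disjoint `K`-equivalent slices, over `C` and over `D`, make all other towers
smaller than `C` and absorb them over `C`, and finally absorb the slice over `D`. All of the new
base then lies in `C`, and all of the new top in the top of `c`. -/
lemma exists_refines_ends_subset [CompactSpace X] (H : Comparison K)
    (hsmall : HasSmallNeighborhoods K) (hL : L.IsDisjoint) (hc : c ∈ L) (hne : c.base.Nonempty) :
    ∃ L' : TowerFamily K, L'.Refines L ∧ L'.base ⊆ c.base ∧ L'.top ⊆ c.top := by
  obtain ⟨C, D, hCc, hDc, hC, hD, hneC, hCD, hequiv⟩ :=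
    H.exists_disjoint_kequiv hsmall c.isClopen_base hne
  obtain ⟨c₁, R₁, hcut₁, hdisj₁, -, hbase₁, c', hc', hslice', hbase'⟩ :=
    exists_refines_cut_of_mem H hL hc hC hCc
  obtain ⟨c₂, R, hcut₂, hdisj₂, hslice₂, hbase₂, -⟩ :=
    exists_refines_cut_of_mem H (hcut₁.isDisjoint.subset (Finset.subset_insert c₁ R₁)) hc' hD
      (hbase' ▸ fun x hx => ⟨hDc hx, Set.disjoint_right.1 hCD hx⟩)
  obtain ⟨h₁₂, h₁R⟩ : Disjoint c₁.support c₂.support ∧ Disjoint c₁.support R.support := by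
    rwa [← Set.disjoint_union_right, ← support_insert, hcut₂.support_eq]
  obtain ⟨M, hM, hlt⟩ := exists_refines_base_lt H hsmall
    (hcut₂.isDisjoint.subset (Finset.subset_insert c₂ R)) hC hneC
  obtain ⟨S, hS, hbaseS⟩ := exists_refines_absorb_family H hM.isDisjoint
    (isDisjoint_singleton c₁) (by rwa [hM.support_eq, support_singleton, disjoint_comm])
    (by rwa [base_singleton, hbase₁])
  rw [base_singleton, hbase₁] at hbaseS
  have hSR : S.Refines (insert c₁ R) := by
    rw [Finset.insert_eq, Finset.union_comm]
    exact hS.trans (hM.union (.refl (isDisjoint_singleton c₁))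
      (by rwa [support_singleton, disjoint_comm]))
  have hc₂R : Disjoint c₂.support (TowerFamily.support (insert c₁ R)) := by
    rw [support_insert]
    exact Set.disjoint_union_right.2 ⟨h₁₂.symm, hdisj₂⟩
  obtain ⟨L', hL', hbaseL', htopL'⟩ := exists_refines_absorb_top H hS.isDisjoint
    (hSR.support_eq ▸ hc₂R) (by rwa [hbaseS, hbase₂])
  have hcut : TowerFamily.Refines (insert c₂ (insert c₁ R)) L :=
    Finset.insert_comm c₁ c₂ R ▸ (hcut₂.insert hdisj₁).trans hcut₁
  exact ⟨L', (hL'.trans (hSR.insert hc₂R)).trans hcut, (hbaseL'.trans hbaseS).subset.trans hCc,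
    htopL'.trans (hslice₂.trans hslice').top_subset⟩

end TowerFamily

end Absorb

/-! ### Balancing -/

section Balance

variable {X : Type*} [TopologicalSpace X] [MeasurableSpace X] {K : Set (ProbabilityMeasure X)}

namespace Tower

variable {s c d : Tower K} {U V : Set X}

open Classical in
/-- The number of levels of `c` which meet `U`. -/
noncomputable def occupancy (U : Set X) (c : Tower K) : ℕ :=
  Nat.count (fun j => (c.level j ∩ U).Nonempty) c.height

/-- The number of levels of `c` which meet `U`, minus the number of those which meet `V`. -/
noncomputable def excess (U V : Set X) (c : Tower K) : ℤ := c.occupancy U - c.occupancy V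

lemma excess_swap (U V : Set X) (c : Tower K) : c.excess V U = -c.excess U V := (neg_sub _ _).symm

lemma occupancy_eq_zero (H : Comparison K) (h : c.base = ∅) : c.occupancy U = 0 := by
  simp [occupancy, level_eq_empty_of_base H h]

lemma excess_eq_zero (H : Comparison K) (h : c.base = ∅) : c.excess U V = 0 := by
  simp [excess, occupancy_eq_zero H h]

lemma IsSlice.occupancy_eq (H : Comparison K) (h : d.IsSlice c) (hne : d.base.Nonempty)
    (hc : ∀ j, IsPure (c.level j) U) : d.occupancy U = c.occupancy U := by
  classical
  simp only [occupancy, Nat.count_eq_card_filter_range, h.1]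
  congr 1
  refine Finset.filter_congr fun j hj => (hc j).inter_nonempty_iff (h.2 j) ?_
  exact level_nonempty H hne (h.1 ▸ Finset.mem_range.1 hj)

lemma IsStack.occupancy_eq (H : Comparison K) (h : d.IsStack s c) (hne : d.base.Nonempty)
    (hs : ∀ j, IsPure (s.level j) U) (hc : ∀ j, IsPure (c.level j) U) :
    d.occupancy U = s.occupancy U + c.occupancy U := by
  classical
  have hlevel j (hj : j < s.height + c.height) : (d.level j).Nonempty :=
    level_nonempty H hne (h.height_eq ▸ hj)
  rw [occupancy, h.height_eq, Nat.count_add]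
  simp only [occupancy, Nat.count_eq_card_filter_range]
  congr 2
  · refine Finset.filter_congr fun j hj => ?_
    rw [Finset.mem_range] at hj
    exact (hs j).inter_nonempty_iff (h.lower j hj) (hlevel j (by omega))
  · refine Finset.filter_congr fun j hj => ?_
    rw [Finset.mem_range] at hj
    exact (hc j).inter_nonempty_iff (h.upper j) (hlevel _ (by omega))

lemma IsSlice.excess_eq (H : Comparison K) (h : d.IsSlice c) (hU : ∀ j, IsPure (c.level j) U)
    (hV : ∀ j, IsPure (c.level j) V) : d.excess U V = c.excess U V ∨ d.excess U V = 0 := by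
  rcases d.base.eq_empty_or_nonempty with hempty | hne
  · exact .inr (excess_eq_zero H hempty)
  · exact .inl (by rw [excess, excess, h.occupancy_eq H hne hU, h.occupancy_eq H hne hV])

lemma IsStack.excess_eq (H : Comparison K) (h : d.IsStack s c) (hsU : ∀ j, IsPure (s.level j) U)
    (hsV : ∀ j, IsPure (s.level j) V) (hcU : ∀ j, IsPure (c.level j) U)
    (hcV : ∀ j, IsPure (c.level j) V) :
    d.excess U V = s.excess U V + c.excess U V ∨ d.excess U V = 0 := by
  rcases d.base.eq_empty_or_nonempty with hempty | hne
  · exact .inr (excess_eq_zero H hempty)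
  · refine .inl ?_
    rw [excess, excess, excess, h.occupancy_eq H hne hsU hcU, h.occupancy_eq H hne hsV hcV]
    push_cast
    ring

lemma sum_measure_level_inter {μ : ProbabilityMeasure X} (hμ : μ ∈ K)
    (hc : ∀ j, IsPure (c.level j) U) :
    ∑ j ∈ Finset.range c.height, μ (c.level j ∩ U) = c.occupancy U * μ c.base := by
  classical
  rw [occupancy, Nat.count_eq_card_filter_range, ← nsmul_eq_mul, ← Finset.sum_const,
    Finset.sum_filter]
  refine Finset.sum_congr rfl fun j hj => ?_
  split_ifs with hne
  · obtain ⟨x, hxj, hxU⟩ := hne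
    rw [Set.inter_eq_self_of_subset_left ((hc j).subset_of_mem hxj hxU)]
    exact c.kequiv_level j (Finset.mem_range.1 hj) 0 c.height_pos μ hμ
  · rw [Set.not_nonempty_iff_eq_empty.1 hne, μ.coeFn_empty]

end Tower

namespace TowerFamily

variable {L : TowerFamily K} {c : Tower K} {U V : Set X}

lemma IsPartition.exists_mem_level (hL : L.IsPartition) (x : X) : ∃ c ∈ L, ∃ j, x ∈ c.level j :=
  mem_support.1 (hL.support_eq ▸ Set.mem_univ x)

/-- `L` is a partition into towers which are split neither by `U` nor by `V`, and in which `U`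
has between `-q` and `p` more levels than `V`. -/
structure ExcessBounded (L : TowerFamily K) (U V : Set X) (q p : ℕ) : Prop where
  isPartition : L.IsPartition
  compatible_left : L.Compatible U
  compatible_right : L.Compatible V
  neg_le_excess : ∀ c ∈ L, -(q : ℤ) ≤ c.excess U V
  excess_le : ∀ c ∈ L, c.excess U V ≤ p

lemma ExcessBounded.swap {p q : ℕ} (h : L.ExcessBounded U V q p) : L.ExcessBounded V U p q where
  isPartition := h.isPartition
  compatible_left := h.compatible_right
  compatible_right := h.compatible_left
  neg_le_excess c hc := by
    rw [c.excess_swap]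
    exact neg_le_neg (h.excess_le c hc)
  excess_le c hc := by
    rw [c.excess_swap]
    exact neg_le.1 (h.neg_le_excess c hc)

lemma ExcessBounded.excess_bounds_of_absorb {p q : ℕ} {s d : Tower K}
    (H : Comparison K) (h : L.ExcessBounded U V q (p + 1)) (hc : c ∈ L) (hcp : c.excess U V = p + 1)
    (hs : s ∈ L) (hneg : s.excess U V < 0) (hd : d.IsSlice s ∨ d.IsStack s c) :
    -(q : ℤ) ≤ d.excess U V ∧ d.excess U V < p + 1 := by
  have hle := h.neg_le_excess s hs
  rcases hd with hslice | hstack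
  · have := hslice.excess_eq H (h.compatible_left s hs) (h.compatible_right s hs)
    omega
  · have := hstack.excess_eq H (h.compatible_left s hs) (h.compatible_right s hs)
      (h.compatible_left c hc) (h.compatible_right c hc)
    omega

variable [OpensMeasurableSpace X]

lemma IsPartition.measure_eq_sum (hL : L.IsPartition) (μ : ProbabilityMeasure X)
    (hU : MeasurableSet U) :
    μ U = ∑ c ∈ L, ∑ j ∈ Finset.range c.height, μ (c.level j ∩ U) := by
  have hunion : U = ⋃ a ∈ L.sigma fun c => Finset.range c.height, a.1.level a.2 ∩ U := by
    refine Set.Subset.antisymm (fun x hx => ?_)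
      (Set.iUnion₂_subset fun a _ => Set.inter_subset_right)
    obtain ⟨c, hc, j, hj⟩ := hL.exists_mem_level x
    exact Set.mem_biUnion (x := (⟨c, j⟩ : Σ _ : Tower K, ℕ))
      (Finset.mem_sigma.2 ⟨hc, Finset.mem_range.2 (Tower.lt_height_of_mem hj)⟩) ⟨hj, hx⟩
  rw [← Finset.sum_sigma L (fun c => Finset.range c.height) fun a => μ (a.1.level a.2 ∩ U)]
  nth_rewrite 1 [hunion]
  refine measure_biUnion_eq_sum μ ?_ fun a _ =>
    (a.1.isClopen_level a.2).isOpen.measurableSet.inter hU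
  rintro ⟨c, i⟩ hc ⟨d, j⟩ hd hne
  refine Set.disjoint_left.2 fun x hx hx' => hne ?_
  obtain ⟨rfl, rfl⟩ := hL.isDisjoint.position_unique (Finset.mem_sigma.1 hc).1
    (Finset.mem_sigma.1 hd).1 hx.1 hx'.1
  rfl

lemma IsPartition.measure_eq_sum_occupancy (hL : L.IsPartition) (hLU : L.Compatible U)
    (hU : IsClopen U) {μ : ProbabilityMeasure X} (hμ : μ ∈ K) :
    μ U = ∑ c ∈ L, c.occupancy U * μ c.base :=
  (hL.measure_eq_sum μ hU.isOpen.measurableSet).trans <|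
    Finset.sum_congr rfl fun c hc => Tower.sum_measure_level_inter hμ (hLU c hc)

lemma IsDisjoint.measure_base (hL : L.IsDisjoint) (μ : ProbabilityMeasure X) :
    μ L.base = ∑ c ∈ L, μ c.base :=
  measure_biUnion_eq_sum μ (hL.mono fun c => c.level_subset_support 0)
    fun c _ => c.isClopen_base.isOpen.measurableSet

namespace ExcessBounded

variable {p q : ℕ}

lemma sum_excess_eq_zero (h : L.ExcessBounded U V q p) (hU : IsClopen U) (hV : IsClopen V)
    (hUV : KEquiv K U V) {μ : ProbabilityMeasure X} (hμ : μ ∈ K) :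
    ∑ c ∈ L, (c.excess U V : ℝ) * μ c.base = 0 := by
  have hsum := hUV μ hμ
  rw [h.isPartition.measure_eq_sum_occupancy h.compatible_left hU hμ,
    h.isPartition.measure_eq_sum_occupancy h.compatible_right hV hμ] at hsum
  simp only [Tower.excess, Int.cast_sub, Int.cast_natCast, sub_mul, Finset.sum_sub_distrib]
  exact sub_eq_zero.2 (mod_cast hsum)

/-- Towers of negative excess have enough room above them for a tower `c` of maximal excess `p`:
since the excesses, weighted by the measures of the bases, add up to `0`, the difference of measures
times `p` is a combination of measures with coefficients `excess d + p` for the towers of negative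
excess and `excess d` for the other towers `d ≠ c`. -/
lemma exists_subset_base_kequiv (H : Comparison K) (h : L.ExcessBounded U V q p) (hU : IsClopen U)
    (hV : IsClopen V) (hUV : KEquiv K U V) (hqp : q ≤ p) (hp : 0 < p) (hc : c ∈ L)
    (hcp : c.excess U V = p) :
    ∃ C ⊆ base (L.filter fun d => d.excess U V < 0), IsClopen C ∧ KEquiv K c.base C := by
  set N : TowerFamily K := L.filter fun d => d.excess U V < 0
  let w (d : Tower K) : ℤ :=
    d.excess U V + (if d.excess U V < 0 then (p : ℤ) else 0) - if d = c then (p : ℤ) else 0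
  have hw d (hd : d ∈ L) : 0 ≤ w d := by
    have hle := h.neg_le_excess d hd
    simp only [w]
    by_cases hdc : d = c
    · simp [hdc, hcp, (Int.natCast_nonneg p).not_gt]
    · split_ifs <;> omega
  refine H.exists_subset_kequiv_of_sum (s := L) (w := fun d => w d) (D := Tower.base) (p := p)
    c.isClopen_base N.isClopen_base (mod_cast hp) (fun d hd => mod_cast hw d hd)
    (fun d _ => d.isClopen_base) fun μ hμ => ?_
  have hNL : N ⊆ L := Finset.filter_subset ..
  have hN : (μ N.base : ℝ) = ∑ d ∈ L, if d.excess U V < 0 then (μ d.base : ℝ) else 0 := by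
    rw [(h.isPartition.isDisjoint.subset hNL).measure_base μ, NNReal.coe_sum, Finset.sum_filter]
  have hzero := h.sum_excess_eq_zero hU hV hUV hμ
  simp only [w, Int.cast_sub, Int.cast_add, sub_mul, add_mul, Finset.sum_sub_distrib,
    Finset.sum_add_distrib, hzero, hN]
  simp [hc, mul_sub, Finset.mul_sum]

lemma exists_refines_lower_top (H : Comparison K) (h : L.ExcessBounded U V q (p + 1))
    (hU : IsClopen U) (hV : IsClopen V) (hUV : KEquiv K U V) (hqp : q ≤ p + 1) (hc : c ∈ L)
    (hcp : c.excess U V = p + 1) :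
    ∃ L' : TowerFamily K, L'.Refines L ∧ L'.ExcessBounded U V q (p + 1) ∧
      (L'.filter fun d : Tower K => d.excess U V = p + 1).card <
        (L.filter fun d : Tower K => d.excess U V = p + 1).card := by
  obtain ⟨C, hCN, hC, hcC⟩ := h.exists_subset_base_kequiv H hU hV hUV hqp p.succ_pos hc
    (mod_cast hcp)
  set N : TowerFamily K := L.filter fun d => d.excess U V < 0 with hN
  have hNL : N ⊆ L := Finset.filter_subset _ L
  have hcN : c ∉ N := by simp [hN, hcp]; omega
  obtain ⟨S, hS, -, hSN⟩ := exists_refines_absorb H (h.isPartition.isDisjoint.subset hNL)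
    (h.isPartition.isDisjoint.support_disjoint_of_notMem hc hNL hcN) hC hCN hcC.symm
  have hlt d (hd : d ∈ S) : -(q : ℤ) ≤ d.excess U V ∧ d.excess U V < p + 1 := by
    obtain ⟨s, hs, hds⟩ : ∃ s ∈ N, d.IsSlice s ∨ d.IsStack s c := by
      rcases hSN d hd with ⟨s, hs, hslice, -⟩ | ⟨s, hs, hstack⟩
      exacts [⟨s, hs, .inl hslice⟩, ⟨s, hs, .inr hstack⟩]
    exact h.excess_bounds_of_absorb H hc hcp (hNL hs) (Finset.mem_filter.1 hs).2 hds
  have hsub : insert c N ⊆ L := Finset.insert_subset hc hNL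
  have href : TowerFamily.Refines (S ∪ (L \ insert c N)) L := by
    have := hS.union (.refl (h.isPartition.isDisjoint.subset Finset.sdiff_subset))
      (h.isPartition.isDisjoint.support_disjoint hsub Finset.sdiff_subset Finset.disjoint_sdiff)
    rwa [Finset.union_sdiff_of_subset hsub] at this
  refine ⟨_, href, ⟨href.isPartition h.isPartition, href.compatible h.compatible_left,
    href.compatible h.compatible_right, ?_, ?_⟩, ?_⟩
  · intro d hd
    rcases Finset.mem_union.1 hd with hd | hd
    exacts [(hlt d hd).1, h.neg_le_excess d (Finset.sdiff_subset hd)]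
  · intro d hd
    rcases Finset.mem_union.1 hd with hd | hd
    exacts [(hlt d hd).2.le, h.excess_le d (Finset.sdiff_subset hd)]
  · refine (Finset.card_le_card fun d hd => ?_).trans_lt
      (Finset.card_erase_lt_of_mem (Finset.mem_filter.2 ⟨hc, hcp⟩))
    obtain ⟨hd, hdp⟩ := Finset.mem_filter.1 hd
    have hdL := (Finset.mem_union.1 hd).resolve_left fun hd => (hlt d hd).2.ne hdp
    simp only [Finset.mem_sdiff, Finset.mem_insert, not_or] at hdL
    simp [hdL, hdp]

lemma exists_refines_lower (H : Comparison K) (h : L.ExcessBounded U V q (p + 1))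
    (hU : IsClopen U) (hV : IsClopen V) (hUV : KEquiv K U V) (hqp : q ≤ p + 1) :
    ∃ L' : TowerFamily K, L'.Refines L ∧ L'.ExcessBounded U V q p := by
  induction hn : (L.filter fun d : Tower K => d.excess U V = p + 1).card using
    Nat.strong_induction_on generalizing L with
  | _ n ih =>
    by_cases hex : ∃ c ∈ L, c.excess U V = p + 1
    · obtain ⟨c, hc, hcp⟩ := hex
      obtain ⟨L₁, href₁, h₁, hlt⟩ := h.exists_refines_lower_top H hU hV hUV hqp hc hcp
      obtain ⟨L₂, href₂, h₂⟩ := ih _ (hn ▸ hlt) h₁ rfl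
      exact ⟨L₂, href₂.trans href₁, h₂⟩
    · refine ⟨L, .refl h.isPartition.isDisjoint, { h with excess_le := fun c hc => ?_ }⟩
      have hle := h.excess_le c hc
      have hne : c.excess U V ≠ p + 1 := fun hcp => hex ⟨c, hc, hcp⟩
      push_cast at hle
      omega

lemma exists_refines_zero (H : Comparison K) (h : L.ExcessBounded U V p p)
    (hU : IsClopen U) (hV : IsClopen V) (hUV : KEquiv K U V) :
    ∃ L' : TowerFamily K, L'.Refines L ∧ L'.ExcessBounded U V 0 0 := by
  induction p generalizing L with
  | zero => exact ⟨L, .refl h.isPartition.isDisjoint, h⟩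
  | succ p ih =>
    obtain ⟨L₁, href₁, h₁⟩ := h.exists_refines_lower H hU hV hUV le_rfl
    obtain ⟨L₂, href₂, h₂⟩ := h₁.swap.exists_refines_lower H hV hU hUV.symm p.le_succ
    obtain ⟨L₃, href₃, h₃⟩ := ih h₂.swap
    exact ⟨L₃, (href₃.trans href₂).trans href₁, h₃⟩

end ExcessBounded

/-- `U` and `V` are unions of levels of `L`, equally many in every tower. -/
structure IsBalanced (L : TowerFamily K) (U V : Set X) : Prop where
  compatible_left : L.Compatible U
  compatible_right : L.Compatible V
  occupancy_eq : ∀ c ∈ L, c.occupancy U = c.occupancy V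

lemma exists_refines_isBalanced (H : Comparison K) (hL : L.IsPartition) (hLU : L.Compatible U)
    (hLV : L.Compatible V) (hU : IsClopen U) (hV : IsClopen V) (hUV : KEquiv K U V) :
    ∃ L' : TowerFamily K, L'.Refines L ∧ L'.IsBalanced U V := by
  have hbound c (hc : c ∈ L) : |c.excess U V| ≤ (L.sup fun d => (d.excess U V).natAbs : ℕ) := by
    rw [Int.abs_eq_natAbs]
    exact_mod_cast Finset.le_sup (f := fun d : Tower K => (d.excess U V).natAbs) hc
  obtain ⟨L', href, h⟩ := ExcessBounded.exists_refines_zero H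
    ⟨hL, hLU, hLV, fun c hc => neg_le_of_abs_le (hbound c hc),
      fun c hc => le_of_abs_le (hbound c hc)⟩ hU hV hUV
  refine ⟨L', href, h.compatible_left, h.compatible_right, fun c hc => ?_⟩
  have hle := h.excess_le c hc
  have hge := h.neg_le_excess c hc
  simp only [Tower.excess] at hle hge
  omega

end TowerFamily

end Balance

/-! ### The homeomorphism determined by a sequence of refinements -/

section Limit

variable {X : Type*} [TopologicalSpace X] [CompactSpace X]

lemma exists_forall_mem_of_isClopen {S : ℕ → Set X} (hS : ∀ n, S (n + 1) ⊆ S n)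
    (h : ∀ n, (S n).Nonempty ∧ IsClopen (S n)) : ∃ y, ∀ n, y ∈ S n := by
  obtain ⟨y, hy⟩ := IsCompact.nonempty_iInter_of_sequence_nonempty_isCompact_isClosed S hS
    (fun n => (h n).1) (h 0).2.isClosed.isCompact fun n => (h n).2.isClosed
  exact ⟨y, Set.mem_iInter.1 hy⟩

variable [T2Space X] [TotallyDisconnectedSpace X]

lemma eq_of_forall_mem_of_isPure {S : ℕ → Set X} {x y : X}
    (hS : ∀ W, IsClopen W → ∃ n, IsPure (S n) W) (hx : ∀ n, x ∈ S n) (hy : ∀ n, y ∈ S n) :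
    x = y := by
  by_contra hxy
  obtain ⟨W, hW, hxW, hyW⟩ := exists_isClopen_of_totally_separated hxy
  obtain ⟨n, hn⟩ := hS W hW
  exact hyW (hn.subset_of_mem (hx n) hxW (hy n))

lemma exists_homeomorph_of_antitone {R : ℕ → X → X → Prop}
    (hanti : ∀ n x y, R (n + 1) x y → R n x y)
    (hright : ∀ n x, {y | R n x y}.Nonempty ∧ IsClopen {y | R n x y})
    (hleft : ∀ n y, {x | R n x y}.Nonempty ∧ IsClopen {x | R n x y})
    (hpure : ∀ W, IsClopen W →
      ∃ n, (∀ x, IsPure {y | R n x y} W) ∧ ∀ y, IsPure {x | R n x y} W) :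
    ∃ g : X ≃ₜ X, ∀ n x, R n x (g x) := by
  choose f hf using fun x => exists_forall_mem_of_isClopen (fun n y => hanti n x y) (hright · x)
  choose f' hf' using fun y => exists_forall_mem_of_isClopen (fun n x => hanti n x y) (hleft · y)
  have pure_right x W (hW : IsClopen W) := (hpure W hW).imp fun n hn => hn.1 x
  have pure_left y W (hW : IsClopen W) := (hpure W hW).imp fun n hn => hn.2 y
  let e : X ≃ X :=
    { toFun := f
      invFun := f'
      left_inv x := eq_of_forall_mem_of_isPure (pure_left (f x)) (hf' (f x)) (hf x)
      right_inv y := eq_of_forall_mem_of_isPure (pure_right (f' y)) (hf (f' y)) (hf' y) }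
  have hcont : Continuous e := by
    refine isTopologicalBasis_isClopen.continuous_iff.2 fun W hW => ?_
    obtain ⟨n, hn, -⟩ := hpure W hW
    have hpreimage : e ⁻¹' W = ⋃ y ∈ W, {x | R n x y} := by
      ext x
      simp only [Set.mem_preimage, Set.mem_iUnion, exists_prop, Set.mem_ofPred_eq]
      exact ⟨fun hx => ⟨_, hx, hf x n⟩,
        fun ⟨y, hy, hxy⟩ => (hn x).subset_of_mem hxy hy (hf x n)⟩
    rw [hpreimage]
    exact isOpen_biUnion fun y _ => (hleft n y).2.isOpen
  exact ⟨hcont.homeoOfEquivCompactToT2, fun n x => hf x n⟩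

end Limit

section Decides

variable {X : Type*} [TopologicalSpace X] [MeasurableSpace X] {K : Set (ProbabilityMeasure X)}

namespace TowerFamily

variable {L L' : TowerFamily K} {c : Tower K} {W : Set X} {x y : X} {j : ℕ}

/-- `W` splits neither the levels nor the base nor the top of `L`. A homeomorphism obeying
`TowerFamily.Step` then maps each level into `W` or into its complement, and so does its inverse. -/
structure Decides (L : TowerFamily K) (W : Set X) : Prop where
  compatible : L.Compatible W
  base : IsPure L.base W
  top : IsPure L.top W

lemma Refines.decides (h : L'.Refines L) (hL : L.Decides W) : L'.Decides W :=
  ⟨h.compatible hL.compatible, hL.base.mono h.base_subset, hL.top.mono h.top_subset⟩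

lemma exists_refines_decides [OpensMeasurableSpace X] [CompactSpace X] [Nonempty X]
    (H : Comparison K) (hsmall : HasSmallNeighborhoods K) (hL : L.IsPartition) (hW : IsClopen W) :
    ∃ L' : TowerFamily K, L'.Refines L ∧ L'.Decides W := by
  obtain ⟨M, hML, hMW⟩ := exists_refines_compatible H hL.isDisjoint hW
  obtain ⟨c, hc, j, hx⟩ := (hML.isPartition hL).exists_mem_level (Classical.arbitrary X)
  have hbase : c.base.Nonempty := Tower.level_nonempty H ⟨_, hx⟩ c.height_pos
  obtain ⟨L', hLM, hb, ht⟩ := exists_refines_ends_subset H hsmall hML.isDisjoint hc hbase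
  exact ⟨L', hLM.trans hML, hLM.compatible hMW, (hMW c hc 0).mono hb, (hMW c hc _).mono ht⟩

/-- The set into which level `j` of `c` moves: the next level or, from the top, the base of `L`. -/
def next (L : TowerFamily K) (c : Tower K) (j : ℕ) : Set X :=
  if j + 1 < c.height then c.level (j + 1) else L.base

/-- The set from which level `j` of `c` is reached: the preceding level or, for the base, the top
of `L`. -/
def prev (L : TowerFamily K) (c : Tower K) : ℕ → Set X
  | 0 => L.top
  | j + 1 => c.level j

lemma IsDisjoint.setOf_step_eq_next (hL : L.IsDisjoint) (hc : c ∈ L) (hx : x ∈ c.level j) :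
    {y | L.Step x y} = L.next c j := by
  ext y
  rw [Set.mem_ofPred_eq, next]
  split_ifs with hj
  · refine ⟨?_, fun hy => .inl ⟨c, hc, j, hx, hy⟩⟩
    rintro (⟨d, hd, i, hxi, hy⟩ | ⟨hxt, -⟩)
    · obtain ⟨rfl, rfl⟩ := hL.position_unique hc hd hx hxi
      exact hy
    · obtain ⟨d, hd, hxd⟩ := mem_top.1 hxt
      obtain ⟨rfl, rfl⟩ := hL.position_unique hc hd hx hxd
      omega
  · have hjt : c.height - 1 = j := by
      have := Tower.lt_height_of_mem hx
      omega
    refine ⟨?_, fun hy => .inr ⟨top_subset_of_mem hc (by rwa [Tower.top, hjt]), hy⟩⟩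
    rintro (⟨d, hd, i, hxi, hy⟩ | ⟨-, hy⟩)
    · obtain ⟨rfl, rfl⟩ := hL.position_unique hc hd hx hxi
      exact absurd (Tower.lt_height_of_mem hy) hj
    · exact hy

lemma IsDisjoint.setOf_step_eq_prev (hL : L.IsDisjoint) (hc : c ∈ L) (hy : y ∈ c.level j) :
    {x | L.Step x y} = L.prev c j := by
  ext x
  rw [Set.mem_ofPred_eq]
  cases j with
  | zero =>
    refine ⟨?_, fun hx => .inr ⟨hx, base_subset_of_mem hc hy⟩⟩
    rintro (⟨d, hd, i, -, hyi⟩ | ⟨hx, -⟩)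
    · exact absurd (hL.position_unique hc hd hy hyi).2 (Nat.succ_ne_zero i).symm
    · exact hx
  | succ j =>
    refine ⟨?_, fun hx => .inl ⟨c, hc, j, hx, hy⟩⟩
    rintro (⟨d, hd, i, hx, hyi⟩ | ⟨-, hyb⟩)
    · obtain ⟨rfl, hji⟩ := hL.position_unique hc hd hy hyi
      rwa [← Nat.succ.inj hji] at hx
    · obtain ⟨d, hd, hyd⟩ := mem_base.1 hyb
      exact absurd (hL.position_unique hc hd hy hyd).2 (Nat.succ_ne_zero j)

lemma IsPartition.nonempty_isClopen_setOf_step_right (H : Comparison K) (hL : L.IsPartition)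
    (x : X) : {y | L.Step x y}.Nonempty ∧ IsClopen {y | L.Step x y} := by
  obtain ⟨c, hc, j, hx⟩ := hL.exists_mem_level x
  rw [hL.isDisjoint.setOf_step_eq_next hc hx, next]
  split_ifs with hj
  · exact ⟨Tower.level_nonempty H ⟨x, hx⟩ hj, c.isClopen_level _⟩
  · exact ⟨(Tower.level_nonempty H ⟨x, hx⟩ c.height_pos).mono (base_subset_of_mem hc),
      L.isClopen_base⟩

lemma IsPartition.nonempty_isClopen_setOf_step_left (H : Comparison K) (hL : L.IsPartition)
    (y : X) : {x | L.Step x y}.Nonempty ∧ IsClopen {x | L.Step x y} := by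
  obtain ⟨c, hc, j, hy⟩ := hL.exists_mem_level y
  rw [hL.isDisjoint.setOf_step_eq_prev hc hy]
  cases j with
  | zero =>
    have htop : c.top.Nonempty :=
      Tower.level_nonempty H ⟨y, hy⟩ (Nat.sub_one_lt c.height_pos.ne')
    exact ⟨htop.mono (top_subset_of_mem hc), L.isClopen_top⟩
  | succ j =>
    have hj := Tower.lt_height_of_mem hy
    exact ⟨Tower.level_nonempty H ⟨y, hy⟩ (by omega), c.isClopen_level j⟩

lemma Decides.isPure_next (h : L.Decides W) (hc : c ∈ L) (j : ℕ) : IsPure (L.next c j) W := by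
  rw [next]
  split_ifs
  exacts [h.compatible c hc _, h.base]

lemma Decides.isPure_prev (h : L.Decides W) (hc : c ∈ L) : ∀ j, IsPure (L.prev c j) W
  | 0 => h.top
  | j + 1 => h.compatible c hc j

lemma exists_homeomorph_of_refines [CompactSpace X] [T2Space X] [TotallyDisconnectedSpace X]
    (H : Comparison K) {L : ℕ → TowerFamily K} (hL : ∀ n, (L n).IsPartition)
    (href : ∀ n, (L (n + 1)).Refines (L n)) (hdec : ∀ W, IsClopen W → ∃ n, (L n).Decides W) :
    ∃ g : X ≃ₜ X, ∀ n x, (L n).Step x (g x) := by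
  refine exists_homeomorph_of_antitone (fun n _ _ => (href n).step)
    (fun n => (hL n).nonempty_isClopen_setOf_step_right H)
    (fun n => (hL n).nonempty_isClopen_setOf_step_left H) fun W hW => ?_
  obtain ⟨n, hn⟩ := hdec W hW
  refine ⟨n, fun x => ?_, fun y => ?_⟩
  · obtain ⟨c, hc, j, hx⟩ := (hL n).exists_mem_level x
    exact (hL n).isDisjoint.setOf_step_eq_next hc hx ▸ hn.isPure_next hc j
  · obtain ⟨c, hc, j, hy⟩ := (hL n).exists_mem_level y
    exact (hL n).isDisjoint.setOf_step_eq_prev hc hy ▸ hn.isPure_prev hc j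

end TowerFamily

end Decides

/-! ### Invariance of the measures -/

section Invariance

lemma measure_inter_preimage {X : Type*} [MeasurableSpace X] {μ : ProbabilityMeasure X}
    {A B B' U : Set X} {g : X → X} (hAB : μ A = μ B) (hB : B ⊆ B')
    (hU : IsPure B' U) (hg : Set.MapsTo g A B') : μ (A ∩ g ⁻¹' U) = μ (B ∩ U) := by
  rcases hU with hU | hU
  · have hA : A ⊆ g ⁻¹' U := fun x hx => hU (hg hx)
    rw [Set.inter_eq_self_of_subset_left hA,
      Set.inter_eq_self_of_subset_left (hB.trans hU), hAB]
  · have hA : Disjoint A (g ⁻¹' U) :=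
      Set.disjoint_left.2 fun x hx hxU => Set.disjoint_left.1 hU (hg hx) hxU
    rw [hA.inter_eq, (hU.mono_left hB).inter_eq]

variable {X : Type*} [TopologicalSpace X] [MeasurableSpace X] {K : Set (ProbabilityMeasure X)}
  {μ : ProbabilityMeasure X} {U : Set X}

namespace TowerFamily

variable {L : TowerFamily K} {c : Tower K} {g : X ≃ₜ X}

lemma IsDisjoint.mapsTo_next (hL : L.IsDisjoint) (hg : ∀ x, L.Step x (g x)) (hc : c ∈ L) (j : ℕ) :
    Set.MapsTo g (c.level j) (L.next c j) := fun x hx =>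
  (hL.setOf_step_eq_next hc hx).subset (hg x)

lemma Decides.sum_measure_level_inter_preimage (h : L.Decides U) (hL : L.IsDisjoint)
    (hg : ∀ x, L.Step x (g x)) (hμ : μ ∈ K) (hc : c ∈ L) :
    ∑ j ∈ Finset.range c.height, μ (c.level j ∩ g ⁻¹' U) =
      ∑ j ∈ Finset.range c.height, μ (c.level j ∩ U) := by
  obtain ⟨m, hm⟩ := Nat.exists_eq_succ_of_ne_zero c.height_pos.ne'
  rw [hm, Finset.sum_range_succ, Finset.sum_range_succ']
  congr 1
  · refine Finset.sum_congr rfl fun j hj => ?_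
    have hj' : j + 1 < c.height := by
      have := Finset.mem_range.1 hj
      omega
    exact measure_inter_preimage (c.kequiv_level j (by omega) _ hj' μ hμ)
      (by rw [next, if_pos hj']) (h.isPure_next hc j) (hL.mapsTo_next hg hc j)
  · refine measure_inter_preimage (c.kequiv_level m (by omega) 0 c.height_pos μ hμ) ?_
      (h.isPure_next hc m) (hL.mapsTo_next hg hc m)
    rw [next, if_neg (by omega)]
    exact base_subset_of_mem hc

lemma Decides.measure_preimage [OpensMeasurableSpace X] (h : L.Decides U) (hL : L.IsPartition)
    (hg : ∀ x, L.Step x (g x)) (hU : IsClopen U) (hμ : μ ∈ K) : μ (g ⁻¹' U) = μ U := by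
  rw [hL.measure_eq_sum μ (hU.preimage g.continuous).isOpen.measurableSet,
    hL.measure_eq_sum μ hU.isOpen.measurableSet]
  exact Finset.sum_congr rfl fun c hc =>
    h.sum_measure_level_inter_preimage hL.isDisjoint hg hμ hc

end TowerFamily

lemma preserves_of_isClopen [CompactSpace X] [T2Space X] [SecondCountableTopology X]
    [TotallyDisconnectedSpace X] [BorelSpace X] {g : X ≃ₜ X}
    (h : ∀ U : Set X, IsClopen U → μ (g ⁻¹' U) = μ U) : Preserves g μ := by
  have hg : Measurable g := g.continuous.measurable
  refine ext_of_generate_finite {U : Set X | IsClopen U} ?_ ?_ ?_ ?_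
  · rw [BorelSpace.measurable_eq (α := X), isTopologicalBasis_isClopen.borel_eq_generateFrom]
  · exact fun A hA B hB _ => IsClopen.inter hA hB
  · intro U hU
    rw [Measure.map_apply hg hU.isOpen.measurableSet]
    simp only [← ProbabilityMeasure.ennreal_coeFn_eq_coeFn_toMeasure, h U hU]
  · rw [Measure.map_apply hg MeasurableSet.univ, Set.preimage_univ]

end Invariance

/-! ### Saturation -/

section FullGroup

variable {X : Type*} [TopologicalSpace X] {n : X → ℤ}

lemma continuous_zpow (g : X ≃ₜ X) (m : ℤ) : Continuous (g.toEquiv ^ m : Equiv.Perm X) := by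
  let φ : (X ≃ₜ X) →* Equiv.Perm X :=
    { toFun := Homeomorph.toEquiv, map_one' := rfl, map_mul' _ _ := rfl }
  have hm : φ (g ^ m) = g.toEquiv ^ m := map_zpow φ g m
  exact hm ▸ (g ^ m).continuous

lemma inTopologicalFullGroup_of_isLocallyConstant [CompactSpace X] {g h : X ≃ₜ X}
    (hn : IsLocallyConstant n) (hh : ∀ x, h x = (g.toEquiv ^ n x) x) :
    InTopologicalFullGroup g h := by
  have hfin : Finite (Set.range n) := hn.range_finite
  obtain ⟨k, ⟨e⟩⟩ := Finite.exists_equiv_fin (Set.range n)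
  refine ⟨k, fun i => n ⁻¹' {(e.symm i : ℤ)}, fun i => e.symm i, fun i => hn.isClopen_fiber _,
    fun x => ⟨e ⟨n x, x, rfl⟩, by simp, fun i hi => ?_⟩, fun i x hx => ?_⟩
  · exact (Equiv.symm_apply_eq e).1 (Subtype.ext (Set.mem_singleton_iff.1 hi).symm)
  · rw [hh, Set.mem_singleton_iff.1 hx]

lemma exists_inTopologicalFullGroup [CompactSpace X] [T2Space X] (g : X ≃ₜ X)
    (hn : IsLocallyConstant n) (hbij : Function.Bijective fun x => (g.toEquiv ^ n x) x) :
    ∃ h : X ≃ₜ X, InTopologicalFullGroup g h ∧ ∀ x, h x = (g.toEquiv ^ n x) x := by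
  have hcont : Continuous (Equiv.ofBijective _ hbij) := by
    refine continuous_iff_continuousAt.2 fun x => ?_
    refine (continuous_zpow g (n x)).continuousAt.congr ?_
    filter_upwards [hn.eventually_eq x] with y hy
    rw [Equiv.ofBijective_apply, hy]
  exact ⟨hcont.homeoOfEquivCompactToT2,
    inTopologicalFullGroup_of_isLocallyConstant hn fun _ => rfl, fun _ => rfl⟩

end FullGroup

section Saturation

lemma exists_perm_of_count_eq {p q : ℕ → Prop} [DecidablePred p] [DecidablePred q] {n : ℕ}
    (h : Nat.count p n = Nat.count q n) :
    ∃ σ : Equiv.Perm (Fin n), ∀ j : Fin n, q (σ j) ↔ p j := by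
  have card_eq_count (r : ℕ → Prop) [DecidablePred r] :
      Fintype.card {j : Fin n // r j} = Nat.count r n := by
    rw [Fintype.card_subtype, Nat.count_eq_card_filter_range, Finset.card_filter,
      Finset.card_filter, Finset.sum_range]
  let e : {j : Fin n // p j} ≃ {j : Fin n // q j} :=
    Fintype.equivOfCardEq (by rw [card_eq_count, card_eq_count, h])
  exact ⟨e.extendSubtype, fun j =>
    ⟨fun hq => by_contra fun hp => e.extendSubtype_not_mem j hp hq, e.extendSubtype_mem j⟩⟩

variable {X : Type*} [TopologicalSpace X] [MeasurableSpace X] {K : Set (ProbabilityMeasure X)}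
  {U V : Set X}

lemma Tower.exists_perm_of_occupancy_eq {c : Tower K} (h : c.occupancy U = c.occupancy V) :
    ∃ σ : Equiv.Perm (Fin c.height),
      ∀ j : Fin c.height, (c.level (σ j) ∩ V).Nonempty ↔ (c.level j ∩ U).Nonempty := by
  classical exact exists_perm_of_count_eq h

namespace TowerFamily

variable {L : TowerFamily K} {c : Tower K} {g : X ≃ₜ X} {x : X} {i j k : ℕ}

lemma IsDisjoint.apply_mem_level_succ_iff (hL : L.IsDisjoint) (hg : ∀ x, L.Step x (g x))
    (hc : c ∈ L) (hj : j + 1 < c.height) : g x ∈ c.level (j + 1) ↔ x ∈ c.level j := by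
  refine ⟨fun hx => (hL.setOf_step_eq_prev hc hx).subset (hg x), fun hx => ?_⟩
  have := hL.mapsTo_next hg hc j hx
  rwa [next, if_pos hj] at this

lemma IsDisjoint.pow_mem_level_add_iff (hL : L.IsDisjoint) (hg : ∀ x, L.Step x (g x))
    (hc : c ∈ L) : ∀ m : ℕ, j + m < c.height →
      ((g.toEquiv ^ m) x ∈ c.level (j + m) ↔ x ∈ c.level j)
  | 0, _ => Iff.rfl
  | m + 1, hm => by
    rw [pow_succ', Equiv.Perm.mul_apply]
    exact (hL.apply_mem_level_succ_iff hg hc hm).trans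
      (hL.pow_mem_level_add_iff hg hc m (Nat.lt_of_succ_lt hm))

lemma IsDisjoint.zpow_mem_level (hL : L.IsDisjoint) (hg : ∀ x, L.Step x (g x)) (hc : c ∈ L)
    (hx : x ∈ c.level j) (hk : k < c.height) :
    (g.toEquiv ^ ((k : ℤ) - j)) x ∈ c.level k := by
  have hj := Tower.lt_height_of_mem hx
  rcases le_total j k with hjk | hkj
  · obtain ⟨m, rfl⟩ := Nat.exists_eq_add_of_le hjk
    rw [Nat.cast_add, add_sub_cancel_left, zpow_natCast]
    exact (hL.pow_mem_level_add_iff hg hc m hk).2 hx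
  · obtain ⟨m, rfl⟩ := Nat.exists_eq_add_of_le hkj
    rw [Nat.cast_add, sub_add_cancel_left, zpow_neg, zpow_natCast,
      ← hL.pow_mem_level_add_iff hg hc m hj, ← Equiv.Perm.mul_apply, mul_inv_cancel,
      Equiv.Perm.one_apply]
    exact hx

lemma IsPartition.exists_isLocallyConstant (hL : L.IsPartition) (f : Tower K → ℕ → ℤ) :
    ∃ n : X → ℤ, IsLocallyConstant n ∧ ∀ c ∈ L, ∀ j, ∀ x ∈ c.level j, n x = f c j := by
  choose c hc j hj using hL.exists_mem_level
  have hf d (hd : d ∈ L) i x (hx : x ∈ d.level i) : f (c x) (j x) = f d i := by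
    obtain ⟨hcd, hji⟩ := hL.isDisjoint.position_unique (hc x) hd (hj x) hx
    rw [hcd, hji]
  refine ⟨fun x => f (c x) (j x), (IsLocallyConstant.iff_exists_open _).2 fun x => ?_, hf⟩
  exact ⟨(c x).level (j x), ((c x).isClopen_level _).isOpen, hj x,
    fun y hy => hf _ (hc x) _ y hy⟩

lemma IsPartition.exists_rearrangement [CompactSpace X] [T2Space X] (hL : L.IsPartition)
    (hg : ∀ x, L.Step x (g x)) (σ : ∀ c : Tower K, Equiv.Perm (Fin c.height)) :
    ∃ h : X ≃ₜ X, InTopologicalFullGroup g h ∧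
      ∀ c ∈ L, ∀ j : Fin c.height, ∀ x ∈ c.level j, h x ∈ c.level (σ c j) := by
  obtain ⟨n, hn, hnσ⟩ := hL.exists_isLocallyConstant fun c j =>
    if hj : j < c.height then (σ c ⟨j, hj⟩ : ℤ) - j else 0
  have n_eq c (hc : c ∈ L) (j : Fin c.height) x (hx : x ∈ c.level j) :
      n x = ((σ c j : ℕ) : ℤ) - (j : ℕ) := by
    rw [hnσ c hc j x hx, dif_pos j.is_lt]
  have zpow_mem c (hc : c ∈ L) (j : Fin c.height) x (hx : x ∈ c.level j) :
      (g.toEquiv ^ n x) x ∈ c.level (σ c j) := by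
    rw [n_eq c hc j x hx]
    exact hL.isDisjoint.zpow_mem_level hg hc hx (σ c j).is_lt
  have exists_mem x : ∃ c ∈ L, ∃ j : Fin c.height, x ∈ c.level j := by
    obtain ⟨c, hc, j, hx⟩ := hL.exists_mem_level x
    exact ⟨c, hc, ⟨j, Tower.lt_height_of_mem hx⟩, hx⟩
  have hinj : Function.Injective fun x => (g.toEquiv ^ n x) x := by
    intro x y hxy
    obtain ⟨c, hc, i, hx⟩ := exists_mem x
    obtain ⟨d, hd, j, hy⟩ := exists_mem y
    dsimp only at hxy
    obtain ⟨rfl, hij⟩ := hL.isDisjoint.position_unique hc hd (zpow_mem c hc i x hx)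
      (hxy ▸ zpow_mem d hd j y hy)
    obtain rfl : i = j := (σ c).injective (Fin.ext hij)
    rw [n_eq c hc i x hx, n_eq c hc i y hy] at hxy
    exact Equiv.injective _ hxy
  have hsurj : Function.Surjective fun x => (g.toEquiv ^ n x) x := by
    intro y
    obtain ⟨c, hc, j, hy⟩ := exists_mem y
    obtain ⟨i, rfl⟩ := (σ c).surjective j
    refine ⟨(g.toEquiv ^ (((i : ℕ) : ℤ) - (σ c i : ℕ))) y, ?_⟩
    dsimp only
    rw [n_eq c hc i _ (hL.isDisjoint.zpow_mem_level hg hc hy i.is_lt), ← Equiv.Perm.mul_apply,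
      ← zpow_add, sub_add_sub_cancel', sub_self, zpow_zero, Equiv.Perm.one_apply]
  obtain ⟨h, hfull, hh⟩ := exists_inTopologicalFullGroup g hn ⟨hinj, hsurj⟩
  exact ⟨h, hfull, fun c hc j x hx => hh x ▸ zpow_mem c hc j x hx⟩

lemma IsBalanced.exists_image_eq [CompactSpace X] [T2Space X] (hUV : L.IsBalanced U V)
    (hL : L.IsPartition) (hg : ∀ x, L.Step x (g x)) :
    ∃ h : X ≃ₜ X, InTopologicalFullGroup g h ∧ h '' U = V := by
  have hperm (c : Tower K) : ∃ σ : Equiv.Perm (Fin c.height), c ∈ L → ∀ j : Fin c.height,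
      (c.level (σ j) ∩ V).Nonempty ↔ (c.level j ∩ U).Nonempty := by
    by_cases hc : c ∈ L
    · exact (Tower.exists_perm_of_occupancy_eq (hUV.occupancy_eq c hc)).imp fun σ hσ _ => hσ
    · exact ⟨1, fun hc' => absurd hc' hc⟩
  choose σ hσ using hperm
  obtain ⟨h, hfull, hh⟩ := hL.exists_rearrangement hg σ
  have mem_iff x : h x ∈ V ↔ x ∈ U := by
    obtain ⟨c, hc, j, hx⟩ := hL.exists_mem_level x
    have hhx := hh c hc ⟨j, Tower.lt_height_of_mem hx⟩ x hx
    rw [← (hUV.compatible_right c hc _).mem_iff hhx, hσ c hc,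
      (hUV.compatible_left c hc j).mem_iff hx]
  refine ⟨h, hfull, ?_⟩
  rw [← Set.image_preimage_eq V h.surjective]
  exact congrArg (h '' ·) (Set.ext mem_iff).symm

end TowerFamily

end Saturation

/-! ### The sequence of refinements -/

section Sequence

variable {X : Type*} [TopologicalSpace X] [MeasurableSpace X] {K : Set (ProbabilityMeasure X)}

/-- The tower of height one with level `X`. -/
def Tower.univ (K : Set (ProbabilityMeasure X)) : Tower K where
  height := 1
  level j := if j = 0 then Set.univ else ∅
  height_pos := Nat.one_pos
  isClopen_level j := by split_ifs; exacts [isClopen_univ, isClopen_empty]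
  kequiv_level i hi j hj := by
    rw [Nat.lt_one_iff.1 hi, Nat.lt_one_iff.1 hj]
    exact .refl _
  level_eq_empty j hj := if_neg (Nat.one_le_iff_ne_zero.1 hj)
  disjoint_level i j hij := by
    rw [Function.onFun]
    split_ifs with hi hj
    · exact absurd (hi.trans hj.symm) hij
    all_goals simp

namespace TowerFamily

lemma isPartition_singleton_univ : TowerFamily.IsPartition {Tower.univ K} where
  isDisjoint := isDisjoint_singleton _
  support_eq := by
    rw [support_singleton]
    exact Set.eq_univ_of_univ_subset ((Tower.univ K).level_subset_support 0)

lemma exists_refines_seq {ι : Type*} [Countable ι] [Nonempty ι] {P : ι → TowerFamily K → Prop}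
    {L₀ : TowerFamily K} (hL₀ : L₀.IsPartition)
    (hP : ∀ i (L : TowerFamily K), L.IsPartition → ∃ L' : TowerFamily K, L'.Refines L ∧ P i L') :
    ∃ L : ℕ → TowerFamily K, (∀ n, (L n).IsPartition) ∧ (∀ n, (L (n + 1)).Refines (L n)) ∧
      ∀ i, ∃ n, P i (L n) := by
  obtain ⟨e, he⟩ := exists_surjective_nat ι
  choose! F hF hFP using hP
  let L (n : ℕ) : TowerFamily K := n.rec L₀ fun n M => F (e n) M
  have hL n : (L n).IsPartition := by
    induction n with
    | zero => exact hL₀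
    | succ n ih => exact (hF (e n) _ ih).isPartition ih
  refine ⟨L, hL, fun n => hF (e n) _ (hL n), fun i => ?_⟩
  obtain ⟨n, rfl⟩ := he i
  exact ⟨n + 1, hFP (e n) _ (hL n)⟩

variable [CompactSpace X] [Nonempty X] [OpensMeasurableSpace X]

lemma exists_refines_decides_isBalanced (H : Comparison K) (hsmall : HasSmallNeighborhoods K)
    {L : TowerFamily K} (hL : L.IsPartition) {U V : Set X} (hU : IsClopen U) (hV : IsClopen V) :
    ∃ L' : TowerFamily K, L'.Refines L ∧ L'.Decides U ∧ (KEquiv K U V → L'.IsBalanced U V) := by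
  obtain ⟨M, hML, hMU⟩ := exists_refines_decides H hsmall hL hU
  by_cases hUV : KEquiv K U V
  · obtain ⟨N, hNM, hNV⟩ := exists_refines_compatible H hML.isDisjoint hV
    have hNL := hNM.trans hML
    obtain ⟨L', hLN, hbal⟩ := exists_refines_isBalanced H (hNL.isPartition hL)
      (hNM.compatible hMU.compatible) hNV hU hV hUV
    exact ⟨L', hLN.trans hNL, hLN.decides (hNM.decides hMU), fun _ => hbal⟩
  · exact ⟨M, hML, hMU, fun h => absurd h hUV⟩

lemma exists_refines_seq_decides_isBalanced [SecondCountableTopology X] [T2Space X]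
    [TotallyDisconnectedSpace X] (H : Comparison K) (hsmall : HasSmallNeighborhoods K) :
    ∃ L : ℕ → TowerFamily K, (∀ n, (L n).IsPartition) ∧ (∀ n, (L (n + 1)).Refines (L n)) ∧
      ∀ U V : Set X, IsClopen U → IsClopen V →
        ∃ n, (L n).Decides U ∧ (KEquiv K U V → (L n).IsBalanced U V) := by
  have : Countable (TopologicalSpace.Clopens X) :=
    TopologicalSpace.Clopens.countable_iff_secondCountable.2 inferInstance
  obtain ⟨L, hL, href, hdec⟩ := exists_refines_seq isPartition_singleton_univ
    fun (W : TopologicalSpace.Clopens X × TopologicalSpace.Clopens X) _ hM =>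
      exists_refines_decides_isBalanced H hsmall hM W.1.isClopen W.2.isClopen
  exact ⟨L, hL, href, fun U V hU hV => hdec ⟨⟨U, hU⟩, ⟨V, hV⟩⟩⟩

end TowerFamily

end Sequence

end DynSimplex

theorem exists_saturated_general
    {X : Type*} [TopologicalSpace X] [CompactSpace X] [TopologicalSpace.MetrizableSpace X]
    [TotallyDisconnectedSpace X] [MeasurableSpace X] [BorelSpace X]
    (K : Set (MeasureTheory.ProbabilityMeasure X)) (hne : K.Nonempty) (hcompact : IsCompact K)
    (hK : ∀ μ ∈ K, DynSimplex.Atomless μ ∧ DynSimplex.FullSupport μ) (hgood : DynSimplex.Good K) :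
    ∃ g : X ≃ₜ X, DynSimplex.PreservesAll K g ∧ DynSimplex.KSaturated K g := by
  let _ := TopologicalSpace.metrizableSpaceMetric X
  have : Nonempty X := ProbabilityMeasure.nonempty hne.some
  have H : DynSimplex.Comparison K := ⟨hne, fun μ hμ => (hK μ hμ).2, hgood⟩
  obtain ⟨L, hL, href, hdec⟩ :=
    DynSimplex.TowerFamily.exists_refines_seq_decides_isBalanced H
      (DynSimplex.hasSmallNeighborhoods hcompact hK)
  obtain ⟨g, hg⟩ := DynSimplex.TowerFamily.exists_homeomorph_of_refines H hL href
    fun W hW => (hdec W W hW hW).imp fun _ hn => hn.1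
  refine ⟨g, fun μ hμ => DynSimplex.preserves_of_isClopen fun U hU => ?_,
    fun U V hU hV hUV => ?_⟩
  · obtain ⟨n, hn, -⟩ := hdec U U hU hU
    exact hn.measure_preimage (hL n) (hg n) hU hμ
  · obtain ⟨n, -, hn⟩ := hdec U V hU hV
    exact (hn hUV).exists_image_eq (hL n) (hg n)

theorem exists_saturated
    {X : Type*} [TopologicalSpace X] [CompactSpace X]
    [TopologicalSpace.MetrizableSpace X] [TotallyDisconnectedSpace X] [PerfectSpace X]
    [Nonempty X] [MeasurableSpace X] [BorelSpace X]
    (K : Set (MeasureTheory.ProbabilityMeasure X)) (hK : DynSimplex.DynamicalSimplex K) :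
    ∃ g : X ≃ₜ X, DynSimplex.PreservesAll K g ∧ DynSimplex.KSaturated K g := by
  exact exists_saturated_general K hK.1 hK.2.1 hK.2.2.2.1 hK.2.2.2.2.1
end

section
/- Let X be a Cantor space, K a dynamical simplex on X, and G the group of all homeomorphisms of X preserving every measure in K. If g ∈ G is K-saturated, then the set K_g of g-invariant Borel probability measures equals the set K_G of Borel probability measures invariant under every element of G. -/
/-!
A `g`-invariant measure `ν` is preserved by every `k` in the full group of `g`, because `k` agrees
at each point with one of the countably many powers of `g`. If `h ∈ G` and `U` is clopen, then
`h⁻¹(U)` and `U` are `K`-equivalent, so saturation provides such a `k` carrying one onto the other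
and `ν (h⁻¹(U)) = ν U`. Clopen sets form a π-system generating the Borel σ-algebra, so `h`
preserves `ν`.
-/

open MeasureTheory

namespace DynSimplex

lemma measure_ext_of_isClopen {X : Type*} [TopologicalSpace X] [SecondCountableTopology X]
    [MeasurableSpace X] [BorelSpace X]
    (hX : TopologicalSpace.IsTopologicalBasis {U : Set X | IsClopen U})
    {μ ν : Measure X} [IsFiniteMeasure μ] (h : ∀ U, IsClopen U → μ U = ν U) : μ = ν :=
  ext_of_generate_finite _ (BorelSpace.measurable_eq.trans hX.borel_eq_generateFrom)
    (fun _ hU _ hV _ => hU.inter hV) h (h _ isClopen_univ)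

lemma measurePreserving_of_forall_exists_eq {ι α β : Type*} [Countable ι] [MeasurableSpace α]
    [MeasurableSpace β] {μ : Measure α} {ν : Measure β} {e : α ≃ᵐ β} {f : ι → α → β}
    (hf : ∀ i, MeasurePreserving (f i) μ ν) (hf_emb : ∀ i, MeasurableEmbedding (f i))
    (hef : ∀ x, ∃ i, e x = f i x) : MeasurePreserving e μ ν := by
  let A i := {x | e x = f i x}
  have hcover : ⋃ i, e '' A i = Set.univ := by
    rw [← Set.image_iUnion, (Set.iUnion_eq_univ_iff (f := A)).2 hef, Set.image_univ,
      e.surjective.range_eq]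
  refine ⟨e.measurable, Measure.ext_of_iUnion_eq_univ hcover fun i => Measure.ext fun T hT => ?_⟩
  have hpre : e ⁻¹' (T ∩ e '' A i) = f i ⁻¹' (T ∩ e '' A i) := by
    have himage : e '' A i = f i '' A i := Set.image_congr fun _ hx => hx
    rw [Set.preimage_inter, Set.preimage_image_eq _ e.injective, himage, Set.preimage_inter,
      Set.preimage_image_eq _ (hf_emb i).injective]
    ext x
    exact and_congr_left fun hx : e x = f i x => by rw [Set.mem_preimage, Set.mem_preimage, hx]
  rw [Measure.restrict_apply hT, Measure.restrict_apply hT, e.map_apply, hpre,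
    (hf i).measure_preimage_emb (hf_emb i)]

lemma homeomorph_toEquiv_zpow {X : Type*} [TopologicalSpace X] (g : X ≃ₜ X) (n : ℤ) :
    (g ^ n).toEquiv = g.toEquiv ^ n :=
  map_zpow (⟨⟨Homeomorph.toEquiv, rfl⟩, fun _ _ => rfl⟩ : (X ≃ₜ X) →* Equiv.Perm X) g n

lemma InTopologicalFullGroup.inFullGroup {X : Type*} [TopologicalSpace X] {g h : X ≃ₜ X}
    (hh : InTopologicalFullGroup g h) : InFullGroup g h := by
  obtain ⟨_, _, n, -, hpartition, hpow⟩ := hh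
  intro x
  obtain ⟨i, hi, -⟩ := hpartition x
  exact ⟨n i, hpow i x hi⟩

/-- Saturation with the full group in place of the topological full group: any two
`K`-equivalent clopen sets are mapped one to the other by an element of the full group of `g`. -/
def FullGroupSaturated {X : Type*} [TopologicalSpace X] [MeasurableSpace X]
    (K : Set (ProbabilityMeasure X)) (g : X ≃ₜ X) : Prop :=
  ∀ U V : Set X, IsClopen U → IsClopen V → (∀ μ ∈ K, μ U = μ V) →
    ∃ h : X ≃ₜ X, InFullGroup g h ∧ h '' U = V

lemma KSaturated.fullGroupSaturated {X : Type*} [TopologicalSpace X] [MeasurableSpace X]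
    {K : Set (ProbabilityMeasure X)} {g : X ≃ₜ X} (hsat : KSaturated K g) :
    FullGroupSaturated K g :=
  fun U V hU hV hUV => (hsat U V hU hV hUV).imp fun _ => .imp_left (·.inFullGroup)

section Invariance

variable {X : Type*} [TopologicalSpace X] [MeasurableSpace X] [BorelSpace X]
  {K : Set (ProbabilityMeasure X)} {g h : X ≃ₜ X} {ν : ProbabilityMeasure X}

lemma Preserves.measurePreserving (hg : Preserves g ν) :
    MeasurePreserving g (ν : Measure X) (ν : Measure X) :=
  ⟨g.measurable, hg⟩

lemma Preserves.measure_preimage (hg : Preserves g ν) (S : Set X) : ν (g ⁻¹' S) = ν S :=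
  congrArg ENNReal.toNNReal (hg.measurePreserving.measure_preimage_emb g.measurableEmbedding S)

lemma Preserves.zpow (hg : Preserves g ν) (n : ℤ) : Preserves (g ^ n) ν :=
  have hg_symm := hg.measurePreserving.symm g.toMeasurableEquiv
  zpow_induction_left (P := (Preserves · ν)) Measure.map_id
    (fun _ hf => (hg.measurePreserving.comp hf.measurePreserving).map_eq)
    (fun _ hf => (hg_symm.comp hf.measurePreserving).map_eq) n

lemma InFullGroup.preserves (hh : InFullGroup g h) (hg : Preserves g ν) : Preserves h ν := by
  have hpow : ∀ x, ∃ n : ℤ, h.toMeasurableEquiv x = (g ^ n) x := fun x => by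
    obtain ⟨n, hn⟩ := hh x
    exact ⟨n, hn.trans (congrArg (· x) (homeomorph_toEquiv_zpow g n)).symm⟩
  exact (measurePreserving_of_forall_exists_eq (fun n => (hg.zpow n).measurePreserving)
    (fun n => (g ^ n).measurableEmbedding) hpow).map_eq

lemma FullGroupSaturated.measure_eq (hsat : FullGroupSaturated K g) (hν : Preserves g ν)
    {U V : Set X} (hU : IsClopen U) (hV : IsClopen V) (hUV : ∀ μ ∈ K, μ U = μ V) : ν U = ν V := by
  obtain ⟨k, hk, rfl⟩ := hsat U V hU hV hUV
  rw [← (hk.preserves hν).measure_preimage (k '' U), Set.preimage_image_eq _ k.injective]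

end Invariance

end DynSimplex

theorem invariantMeasures_eq_G_invariant_of_saturated_general {X : Type*} [TopologicalSpace X]
    [SecondCountableTopology X] [MeasurableSpace X] [BorelSpace X]
    (hX : TopologicalSpace.IsTopologicalBasis {U : Set X | IsClopen U})
    {K : Set (ProbabilityMeasure X)} {g : X ≃ₜ X}
    (hg : DynSimplex.PreservesAll K g) (hsat : DynSimplex.FullGroupSaturated K g) :
    {μ : ProbabilityMeasure X | DynSimplex.Preserves g μ} =
      {ν : ProbabilityMeasure X |
        ∀ h : X ≃ₜ X, DynSimplex.PreservesAll K h → DynSimplex.Preserves h ν} := by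
  ext ν
  refine ⟨fun hν h hh => DynSimplex.measure_ext_of_isClopen hX fun U hU => ?_, fun hν => hν g hg⟩
  have hpre : ν (h ⁻¹' U) = ν U :=
    hsat.measure_eq hν (hU.preimage h.continuous) hU fun μ hμ => (hh μ hμ).measure_preimage U
  rw [h.measurableEmbedding.map_apply, ← ν.ennreal_coeFn_eq_coeFn_toMeasure, hpre,
    ν.ennreal_coeFn_eq_coeFn_toMeasure]

theorem invariantMeasures_eq_G_invariant_of_saturated
    {X : Type*} [TopologicalSpace X] [CompactSpace X]
    [TopologicalSpace.MetrizableSpace X] [TotallyDisconnectedSpace X] [PerfectSpace X]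
    [Nonempty X] [MeasurableSpace X] [BorelSpace X]
    (K : Set (MeasureTheory.ProbabilityMeasure X)) (hK : DynSimplex.DynamicalSimplex K)
    (g : X ≃ₜ X) (hg : DynSimplex.PreservesAll K g) (hsat : DynSimplex.KSaturated K g) :
    {μ : MeasureTheory.ProbabilityMeasure X | DynSimplex.Preserves g μ} =
      {ν : MeasureTheory.ProbabilityMeasure X |
        ∀ h : X ≃ₜ X, DynSimplex.PreservesAll K h → DynSimplex.Preserves h ν} := by
  have := (TopologicalSpace.metrizableSpaceMetric X).toPseudoMetricSpace
  exact invariantMeasures_eq_G_invariant_of_saturated_general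
    isTopologicalBasis_isClopen hg hsat.fullGroupSaturated
end
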